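/- arXiv:2409.13680 — 3 statements merged into one kernel-verified Lean document; each statement's English description precedes it below -/
import Mathlib

section
/- Let G be a k-connected (k ≥ 2) finite simple graph with n ≥ 3 vertices, e edges, minimum degree δ ≥ 1, and maximum degree Δ. If Inv(G) ≤ (n − k − 1)/Δ + (2(k + 1)²δ² − e²)/((k + 1)·Δ³), then G is Hamiltonian. -/
open Finset

/-- The first Zagreb index of a graph: the sum of the squares of the vertex degrees. -/
def zagreb1 {V : Type*} [Fintype V] (G : SimpleGraph V) [DecidableRel G.Adj] : ℝ :=
  ∑ u, (G.degree u : ℝ) ^ 2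

/-- The forgotten topological index of a graph: the sum of the cubes of the vertex degrees. -/
def forgottenIndex {V : Type*} [Fintype V] (G : SimpleGraph V) [DecidableRel G.Adj] : ℝ :=
  ∑ u, (G.degree u : ℝ) ^ 3

/-- The inverse degree of a graph: the sum of the reciprocals of the vertex degrees. -/
noncomputable def invDegree {V : Type*} [Fintype V] (G : SimpleGraph V) [DecidableRel G.Adj] : ℝ :=
  ∑ u, 1 / (G.degree u : ℝ)

/-- The independence number of a graph: the largest cardinality of a set of pairwise
nonadjacent vertices. -/
noncomputable def indepNum {V : Type*} [Fintype V] (G : SimpleGraph V) : ℕ :=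
  sSup {k | ∃ s : Finset V, s.card = k ∧ ∀ u ∈ s, ∀ v ∈ s, ¬ G.Adj u v}

/-- A graph is a regular balanced bipartite graph if its vertices can be partitioned into
two parts of equal size with every edge joining the two parts, and all vertices have the
same degree. -/
def IsRegularBalancedBipartite {V : Type*} [Fintype V] (G : SimpleGraph V) [DecidableRel G.Adj] : Prop :=
  ∃ (A : Finset V) (r : ℕ), 2 * A.card = Fintype.card V ∧
    (∀ u v, G.Adj u v → (u ∈ A ↔ v ∉ A)) ∧ G.IsRegularOfDegree r

/-- A graph is `k`-connected if it has more than `k` vertices and removing any set of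
fewer than `k` vertices leaves a connected graph. -/
def IsKConnected {V : Type*} [Fintype V] (G : SimpleGraph V) (k : ℕ) : Prop :=
  k < Fintype.card V ∧
    ∀ S : Finset V, S.card < k → (G.induce (↑S : Set V)ᶜ).Connected

/-- A graph is traceable if it has a Hamiltonian path. -/
def IsTraceable {V : Type*} [DecidableEq V] (G : SimpleGraph V) : Prop :=
  ∃ (u v : V) (p : G.Walk u v), p.IsHamiltonian

namespace SimpleGraph

variable {V : Type*} {G : SimpleGraph V} {C : Cycle V}

/-- Two vertices are linked outside a cyclic sequence `C` if some walk between them avoids `C`. -/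
def LinkedOutside (G : SimpleGraph V) (C : Cycle V) (a b : V) : Prop :=
  ∃ p : G.Walk a b, ∀ v ∈ p.support, v ∉ C

lemma LinkedOutside.refl {a : V} (ha : a ∉ C) : G.LinkedOutside C a a :=
  ⟨.nil, by simpa using ha⟩

lemma LinkedOutside.symm {a b : V} (h : G.LinkedOutside C a b) : G.LinkedOutside C b a := by
  obtain ⟨p, hp⟩ := h
  exact ⟨p.reverse, by simpa using hp⟩

lemma LinkedOutside.trans {a b c : V} (h : G.LinkedOutside C a b) (h' : G.LinkedOutside C b c) :
    G.LinkedOutside C a c := by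
  obtain ⟨p, hp⟩ := h
  obtain ⟨q, hq⟩ := h'
  refine ⟨p.append q, fun v hv => ?_⟩
  rw [Walk.mem_support_append_iff] at hv
  exact hv.elim (hp v) (hq v)

lemma LinkedOutside.notMem_right {a b : V} (h : G.LinkedOutside C a b) : b ∉ C := by
  obtain ⟨p, hp⟩ := h
  exact hp b p.end_mem_support

lemma LinkedOutside.of_adj {a b : V} (ha : a ∉ C) (hb : b ∉ C) (hab : G.Adj a b) :
    G.LinkedOutside C a b :=
  ⟨hab.toWalk, by simp [ha, hb]⟩

/-- Linked vertices are joined by a path outside `C`, given by its list of vertices. -/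
lemma LinkedOutside.exists_list {a b : V} (h : G.LinkedOutside C a b) :
    ∃ P : List V, P.Nodup ∧ P.IsChain G.Adj ∧ (∀ v ∈ P, v ∉ C) ∧
      P.head? = some a ∧ P.getLast? = some b := by
  classical
  obtain ⟨p, hp⟩ := h
  refine ⟨p.bypass.support, p.bypass_isPath.support_nodup, p.bypass.isChain_adj_support,
    fun v hv => hp v (p.support_bypass_subset_support hv), ?_, ?_⟩
  · rw [List.head?_eq_some_head p.bypass.support_ne_nil, Walk.head_support]
  · rw [List.getLast?_eq_some_getLast p.bypass.support_ne_nil, Walk.getLast_support]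

/-- A cyclic sequence of distinct vertices, consecutive ones adjacent, of maximal length.
A single edge counts as a sequence of length two. -/
structure IsLongestCycle (G : SimpleGraph V) (C : Cycle V) : Prop where
  nodup : C.Nodup
  chain : C.Chain G.Adj
  length_le : ∀ D : Cycle V, D.Nodup → D.Chain G.Adj → D.length ≤ C.length

lemma exists_coe_cons_of_mem {α : Type*} {C : Cycle α} {x : α} (hx : x ∈ C) :
    ∃ l : List α, C = ↑(x :: l) := by
  induction C using Quotient.inductionOn' with
  | h l =>
    obtain ⟨s, t, rfl⟩ := List.append_of_mem (show x ∈ l from hx)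
    exact ⟨t ++ s, Cycle.coe_eq_coe.2 (by
      simpa using (List.isRotated_append (l := s) (l' := x :: t)))⟩

lemma exists_coe_cons_cons_of_mem (hchain : C.Chain G.Adj) {x : V} (hx : x ∈ C) :
    ∃ (y : V) (l : List V), C = ↑(x :: y :: l) := by
  obtain ⟨l, rfl⟩ := exists_coe_cons_of_mem hx
  cases l with
  | nil => simp at hchain
  | cons y l => exact ⟨y, l, rfl⟩

lemma coe_cons_cons_left_unique {α : Type*} {C : Cycle α} (hC : C.Nodup) {x x' y : α}
    {l l' : List α} (h : C = ↑(x :: y :: l)) (h' : C = ↑(x' :: y :: l')) : x = x' := by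
  classical
  subst h
  have hrot := Cycle.coe_eq_coe.1 h'
  have hnd : (x :: y :: l).Nodup := hC
  have hnd' : (x' :: y :: l').Nodup := hrot.nodup_iff.1 hnd
  have e := List.isRotated_prev_eq hrot hnd (x := y) (by simp)
  have e₁ := List.prev_cons_cons_of_ne (l := l) x (x := y) (by simp) (by grind)
  have e₂ := List.prev_cons_cons_of_ne (l := l') x' (x := y) (by simp) (by grind)
  exact e₁.symm.trans (e.trans e₂)

lemma coe_cons_cons_right_unique {α : Type*} {C : Cycle α} (hC : C.Nodup) {x y y' : α}
    {l l' : List α} (h : C = ↑(x :: y :: l)) (h' : C = ↑(x :: y' :: l')) : y = y' := by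
  classical
  subst h
  have hrot := Cycle.coe_eq_coe.1 h'
  have e := List.isRotated_next_eq hrot hC (x := x) (by simp)
  have e₁ := List.next_cons_cons_eq (l := l) (x := x) y (by simp)
  have e₂ := List.next_cons_cons_eq (l := l') (x := x) y' (by simp)
  exact e₁.symm.trans (e.trans e₂)

lemma IsLongestCycle.not_linkedOutside_of_consecutive (hC : G.IsLongestCycle C) {x y a b : V}
    {l : List V} (h : C = ↑(x :: y :: l)) (hxa : G.Adj x a) (hyb : G.Adj y b) :
    ¬ G.LinkedOutside C a b := by
  intro hab
  obtain ⟨P, hnd, hch, hout, hhead, hlast⟩ := hab.exists_list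
  obtain ⟨hCn, hCc, hmax⟩ := hC
  subst h
  have hne : P ≠ [] := by rintro rfl; simp at hhead
  have hlen := hmax ↑(x :: (P ++ y :: l))
    (by
      simp only [Cycle.mem_coe_iff, Cycle.nodup_coe_iff] at *
      simp only [List.nodup_cons, List.nodup_append, List.mem_cons, List.mem_append] at *
      grind)
    (by
      rw [Cycle.chain_coe_cons] at *
      simp only [List.append_assoc, List.cons_append, List.isChain_cons, List.isChain_append,
        List.head?_append, List.head?_cons] at *
      simp only [hhead, hlast] at *
      grind [G.symm, SimpleGraph.Adj.symm])
  have := List.length_pos_of_ne_nil hne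
  simp at hlen
  grind

lemma IsLongestCycle.successors_not_adj (hC : G.IsLongestCycle C) {x x' y y' a b : V}
    {l l' : List V} (h : C = ↑(x :: y :: l)) (h' : C = ↑(x' :: y' :: l')) (hxa : G.Adj x a)
    (hxb : G.Adj x' b) (hab : G.LinkedOutside C a b) : ¬ G.Adj y y' := by
  intro hyy
  have hxx : x ≠ x' := by
    rintro rfl
    exact hyy.ne (coe_cons_cons_right_unique hC.nodup h h')
  have hx'y : x' ≠ y := by
    rintro rfl
    exact hC.not_linkedOutside_of_consecutive h hxa hxb hab
  have hyx : y' ≠ x := by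
    rintro rfl
    exact hC.not_linkedOutside_of_consecutive h' hxb hxa hab.symm
  have hmem : x' ∈ l := by
    have : x' ∈ C := by rw [h']; simp
    rw [h] at this
    simpa [hxx.symm, hx'y] using this
  obtain ⟨A, B, rfl⟩ := List.append_of_mem hmem
  have hrot : C = ↑(x' :: (B ++ x :: y :: A)) := by
    rw [h, Cycle.coe_eq_coe]
    simpa using (List.isRotated_append (l := x :: y :: A) (l' := x' :: B))
  cases B with
  | nil => exact hyx (coe_cons_cons_right_unique hC.nodup h' hrot)
  | cons z B =>
    obtain rfl : y' = z := coe_cons_cons_right_unique hC.nodup h' hrot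
    obtain ⟨P, hnd, hch, hout, hhead, hlast⟩ := hab.exists_list
    obtain ⟨hCn, hCc, hmax⟩ := hC
    clear h' hrot
    subst h
    have hne : P ≠ [] := by rintro rfl; simp at hhead
    have hsplit : (y :: A ++ x' :: y' :: (B ++ [x])).IsChain G.Adj := by
      simpa using (List.isChain_cons.1 hCc).2
    obtain ⟨hA, hB, hAB⟩ := List.isChain_append.1 hsplit
    have hrev : (y :: A).reverse.IsChain G.Adj := by
      rw [List.isChain_reverse]
      exact hA.imp fun _ _ h => h.symm
    have hB' : (y' :: (B ++ [x])).IsChain G.Adj := (List.isChain_cons.1 hB).2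
    have htail : ((y :: A).reverse ++ y' :: (B ++ [x])).IsChain G.Adj :=
      hrev.append hB' (by simpa [List.getLast?_reverse] using hyy)
    have htail' : (x' :: ((y :: A).reverse ++ y' :: (B ++ [x]))).IsChain G.Adj := by
      refine List.isChain_cons.2 ⟨fun z hz => ?_, htail⟩
      refine (hAB z ?_ x' (by simp)).symm
      simpa [List.head?_append, List.head?_reverse, List.getLast?_cons] using hz
    have hlen := hmax ↑(x :: (P ++ x' :: ((y :: A).reverse ++ y' :: B)))
      (by
        simp only [Cycle.mem_coe_iff, Cycle.nodup_coe_iff] at *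
        simp only [List.nodup_cons, List.nodup_append, List.mem_cons, List.mem_append,
          List.nodup_reverse, List.mem_reverse] at *
        grind)
      (by
        rw [Cycle.chain_coe_cons, List.append_assoc, List.cons_append, List.append_assoc,
          List.cons_append]
        refine List.isChain_cons.2 ⟨?_, hch.append htail' ?_⟩
        · simpa [List.head?_append, hhead] using hxa
        · simpa [hlast] using hxb.symm)
    have := List.length_pos_of_ne_nil hne
    simp at hlen
    grind

lemma IsLongestCycle.exists_mem (hC : G.IsLongestCycle C) {a b : V} (hab : G.Adj a b) :
    ∃ v, v ∈ C := by
  have := hC.length_le ↑[a, b] (by simpa using hab.ne) (by simp [hab, hab.symm])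
  induction C using Quotient.inductionOn' with
  | h l =>
    cases l with
    | nil => exact absurd this (by simp)
    | cons v l => exact ⟨v, List.mem_cons_self⟩

section Finite

variable [Fintype V]

lemma _root_.Cycle.Nodup.length_le_card {D : Cycle V} (hD : D.Nodup) : D.length ≤ Fintype.card V := by
  induction D using Quotient.inductionOn' with
  | h l => exact List.Nodup.length_le_card hD

lemma exists_isLongestCycle (G : SimpleGraph V) : ∃ C : Cycle V, G.IsLongestCycle C := by
  let S : Set ℕ := {m | ∃ D : Cycle V, D.Nodup ∧ D.Chain G.Adj ∧ D.length = m}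
  have hbdd : BddAbove S := ⟨Fintype.card V, by
    rintro _ ⟨D, hD, -, rfl⟩
    exact hD.length_le_card⟩
  have hne : S.Nonempty := ⟨0, Cycle.nil, by simp, by simp, by simp⟩
  obtain ⟨C, hnd, hch, hlen⟩ := Nat.sSup_mem hne hbdd
  exact ⟨C, hnd, hch, fun D h h' => hlen ▸ le_csSup hbdd ⟨D, h, h', rfl⟩⟩

lemma IsLongestCycle.isHamiltonian_of_forall_mem [DecidableEq V] (hC : G.IsLongestCycle C)
    (hcard : 3 ≤ Fintype.card V) (hall : ∀ v, v ∈ C) : G.IsHamiltonian := by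
  intro _
  obtain ⟨v⟩ : Nonempty V := Fintype.card_pos_iff.1 (by omega)
  obtain ⟨l, rfl⟩ := exists_coe_cons_of_mem (hall v)
  have hnd : (v :: l).Nodup := hC.nodup
  have hch : (v :: (l ++ [v])).IsChain G.Adj := hC.chain
  have hlen : (v :: l).length = Fintype.card V := by
    rw [← List.toFinset_card_of_nodup hnd, ← Finset.card_univ]
    congr 1
    ext w
    simpa using hall w
  let p := Walk.ofSupport (v :: (l ++ [v])) (by simp) hch
  have hsupp : p.support = v :: (l ++ [v]) := Walk.support_ofSupport _ _
  let q : G.Walk v v := p.copy (by simp) (by simp)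
  have hq : q.support = v :: (l ++ [v]) := (Walk.support_copy p _ _).trans hsupp
  have hqlen : q.length = Fintype.card V := by
    have := q.length_support
    rw [hq] at this
    simp at this hlen
    omega
  have hqnd : q.support.tail.Nodup := by
    rw [hq]
    simpa [List.nodup_append, and_comm, ← List.forall_mem_ne'] using hnd
  refine ⟨v, q, Walk.isHamiltonianCycle_iff_isCycle_and_length_eq.2 ⟨?_, hqlen⟩⟩
  rw [Walk.isCycle_iff_isPath_tail_and_le_length, Walk.isPath_def]
  have hnil : ¬ q.Nil := by
    rw [Walk.not_nil_iff_lt_length]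
    omega
  rw [Walk.support_tail_of_not_nil _ hnil]
  exact ⟨hqnd, by omega⟩

/-- The successors on a longest cycle of the neighbours of a component of its complement. -/
lemma IsLongestCycle.exists_independent_successors {k : ℕ} (hG : IsKConnected G k)
    (hC : G.IsLongestCycle C) {c : V} (hc : c ∈ C) {u : V} (hu : u ∉ C) :
    ∃ Y : Finset V, k ≤ Y.card ∧ (∀ y ∈ Y, ∃ x l, C = ↑(x :: y :: l)) ∧
      (∀ y ∈ Y, ∀ z ∈ Y, ¬ G.Adj y z) ∧
      ∀ y ∈ Y, ∀ w, G.LinkedOutside C u w → ¬ G.Adj y w := by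
  classical
  choose! s t hst using fun x (hx : x ∈ C) => exists_coe_cons_cons_of_mem hC.chain hx
  let X : Finset V := {x | x ∈ C ∧ ∃ w, G.LinkedOutside C u w ∧ G.Adj x w}
  have hX : ∀ x, x ∈ X ↔ x ∈ C ∧ ∃ w, G.LinkedOutside C u w ∧ G.Adj x w := by simp [X]
  have hsX : ∀ x ∈ X, ∀ w, G.LinkedOutside C u w → ¬ G.Adj (s x) w := by
    intro x hx w hw hadj
    obtain ⟨hxC, a, ha, hxa⟩ := (hX x).1 hx
    exact hC.not_linkedOutside_of_consecutive (hst x hxC) hxa hadj (ha.symm.trans hw)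
  refine ⟨X.image s, ?_, ?_, ?_, ?_⟩
  · rw [Finset.card_image_of_injOn]
    · by_contra! hlt
      have hconn := hG.2 X hlt
      have huX : u ∉ X := fun h => hu ((hX u).1 h).1
      obtain ⟨d, hdC, hdX⟩ : ∃ d ∈ C, d ∉ X := by
        by_cases h : c ∈ X
        · refine ⟨s c, ?_, fun h' => ?_⟩
          · have := hst c hc
            rw [this]
            simp
          · obtain ⟨-, w, hw, hadj⟩ := (hX _).1 h'
            exact hsX c h w hw hadj
        · exact ⟨c, hc, h⟩
      obtain ⟨p⟩ := hconn.preconnected ⟨u, by simpa using huX⟩ ⟨d, by simpa using hdX⟩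
      have key : ∀ {a b : ((↑X : Set V)ᶜ : Set V)}, (G.induce (↑X : Set V)ᶜ).Walk a b →
          G.LinkedOutside C u a → G.LinkedOutside C u b := by
        intro a b q
        induction q with
        | nil => exact id
        | @cons a b _ hab _ ih =>
          intro ha
          have hab' : G.Adj a b := hab
          refine ih (ha.trans (.of_adj ha.notMem_right (fun hb => b.2 ?_) hab'))
          exact Finset.mem_coe.2 ((hX _).2 ⟨hb, a, ha, hab'.symm⟩)
      exact (key p (.refl hu)).notMem_right hdC
    · intro x hx x' hx' h
      have hxC := ((hX x).1 hx).1
      have hxC' := ((hX x').1 hx').1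
      have h₁ := hst x hxC
      rw [h] at h₁
      exact coe_cons_cons_left_unique hC.nodup h₁ (hst x' hxC')
  · intro y hy
    obtain ⟨x, hx, rfl⟩ := Finset.mem_image.1 hy
    exact ⟨x, t x, hst x ((hX x).1 hx).1⟩
  · intro y hy z hz
    obtain ⟨x, hx, rfl⟩ := Finset.mem_image.1 hy
    obtain ⟨x', hx', rfl⟩ := Finset.mem_image.1 hz
    obtain ⟨hxC, a, ha, hxa⟩ := (hX x).1 hx
    obtain ⟨hxC', b, hb, hxb⟩ := (hX x').1 hx'
    exact hC.successors_not_adj (hst x hxC) (hst x' hxC') hxa hxb (ha.symm.trans hb)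
  · intro y hy w hw
    obtain ⟨x, hx, rfl⟩ := Finset.mem_image.1 hy
    exact hsX x hx w hw

lemma _root_.IsKConnected.le_degree [DecidableRel G.Adj] {k : ℕ} (hG : IsKConnected G k) (v : V) :
    k ≤ G.degree v := by
  classical
  by_contra! hlt
  have hconn := hG.2 (G.neighborFinset v) hlt
  obtain ⟨w, hw⟩ : ∃ w, w ∉ insert v (G.neighborFinset v) := by
    by_contra! hall
    have hle := Finset.card_insert_le v (G.neighborFinset v)
    rw [Finset.eq_univ_iff_forall.2 hall, Finset.card_univ, card_neighborFinset_eq_degree] at hle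
    have := hG.1
    omega
  rw [Finset.mem_insert, not_or] at hw
  obtain ⟨p⟩ := hconn.preconnected ⟨v, by simp⟩ ⟨w, by simpa using hw.2⟩
  cases p with
  | nil => exact hw.1 rfl
  | @cons _ b _ hadj _ => exact b.2 (by simpa using hadj)

/-- If all neighbours of `v` lie in `insert w S`, `w` is not one of them, and `v` has at least
`#S` neighbours, then `v` is adjacent to all of `S`. -/
lemma adj_of_card_le_degree [DecidableRel G.Adj] {S : Finset V} {v w : V}
    (hS : S.card ≤ G.degree v) (hsub : ∀ z, G.Adj v z → z = w ∨ z ∈ S) (hvw : ¬ G.Adj v w) {z : V}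
    (hz : z ∈ S) : G.Adj v z := by
  have hle : G.neighborFinset v ⊆ S := fun z hz => by
    rw [mem_neighborFinset] at hz
    rcases hsub z hz with rfl | h
    · exact absurd hz hvw
    · exact h
  rw [← mem_neighborFinset, Finset.eq_of_subset_of_card_le hle hS]
  exact hz

/-- A longest cycle leaves no vertex `u` outside when `u`, together with `k` of the independent
successors that it yields, is one of two independent classes of size `k + 1`. -/
lemma IsLongestCycle.false_of_independent_compl [DecidableEq V] [DecidableRel G.Adj] {k : ℕ}
    (hk : 2 ≤ k) (hdeg : ∀ v, k ≤ G.degree v) (hC : G.IsLongestCycle C) {u : V} (hu : u ∉ C)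
    {Y : Finset V} (hYcard : Y.card = k) (hYC : ∀ y ∈ Y, ∃ x l, C = ↑(x :: y :: l))
    (hI : ∀ y ∈ insert u Y, ∀ z ∈ insert u Y, ¬ G.Adj y z)
    (hYu : ∀ y ∈ Y, ∀ w, G.LinkedOutside C u w → ¬ G.Adj y w)
    (hJcard : (insert u Y)ᶜ.card = k + 1)
    (hJ : ∀ y ∉ insert u Y, ∀ z ∉ insert u Y, ¬ G.Adj y z) : False := by
  have hYmem : ∀ y ∈ Y, y ∈ C := by
    intro y hy
    obtain ⟨x, l, h⟩ := hYC y hy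
    rw [h]
    simp
  choose! s t hst using fun x (hx : x ∈ C) => exists_coe_cons_cons_of_mem hC.chain hx
  have hadj_s : ∀ x ∈ C, G.Adj x (s x) := by
    intro x hx
    have := hC.chain
    rw [hst x hx] at this
    exact (List.isChain_cons_cons.1 this).1
  have hs_mem : ∀ x ∈ C, s x ∈ C := by
    intro x hx
    have := hst x hx
    rw [this]
    simp
  obtain ⟨w, hwJ, hwC⟩ : ∃ w, w ∉ insert u Y ∧ w ∉ C := by
    by_contra! hall
    have hle : ((insert u Y)ᶜ).card ≤ Y.card := by
      refine Finset.card_le_card_of_injOn s (fun x hx => ?_) (fun x hx x' hx' h => ?_)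
      · have hx' : x ∉ insert u Y := by simpa [and_comm] using hx
        have hxC := hall x hx'
        by_contra hsY
        refine hJ x hx' (s x) ?_ (hadj_s x hxC)
        rw [Finset.mem_insert, not_or]
        exact ⟨fun h => hu (h ▸ hs_mem x hxC), hsY⟩
      · have hxC := hall x (by simpa [and_comm] using hx)
        have hxC' := hall x' (by simpa [and_comm] using hx')
        have h₁ := hst x hxC
        rw [h] at h₁
        exact coe_cons_cons_left_unique hC.nodup h₁ (hst x' hxC')
    omega
  have huY : u ∉ Y := fun h => hu (hYmem u h)
  have hwu : ¬ G.Adj w u := by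
    intro hwu
    have hsub : G.neighborFinset w ⊆ {u} := by
      intro z hz
      rw [mem_neighborFinset] at hz
      have hzI : z ∈ insert u Y := by
        by_contra hzJ
        exact hJ w hwJ z hzJ hz
      rcases Finset.mem_insert.1 hzI with rfl | hzY
      · simp
      · exact absurd hz.symm (hYu z hzY w (.of_adj hu hwC hwu.symm))
    have := Finset.card_le_card hsub
    rw [card_neighborFinset_eq_degree, Finset.card_singleton] at this
    have := hdeg w
    omega
  have hwY : ∀ y ∈ Y, G.Adj w y := fun y hy =>
    adj_of_card_le_degree (hYcard.trans_le (hdeg w))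
      (fun z hz => by
        by_contra hzI
        exact hJ w hwJ z (by simpa using hzI) hz) hwu hy
  have hux : ∀ x ∈ C, x ∉ Y → G.Adj u x := by
    intro x hx hxY
    refine adj_of_card_le_degree (S := (insert u Y)ᶜ.erase w) (w := w) ?_ (fun z hz => ?_)
      (fun h => hwu h.symm) ?_
    · rw [Finset.card_erase_of_mem (by simpa using hwJ), hJcard]
      exact hdeg u
    · by_cases hzw : z = w
      · exact .inl hzw
      · refine .inr (Finset.mem_erase.2 ⟨hzw, ?_⟩)
        rw [Finset.mem_compl]
        exact fun hzI => hI u (by simp) z hzI hz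
    · simp only [Finset.mem_erase, Finset.mem_compl, Finset.mem_insert, not_or]
      exact ⟨fun h => hwC (h ▸ hx), fun h => hu (h ▸ hx), hxY⟩
  have hYx : ∀ x ∈ C, ∀ y ∈ C, G.Adj x y → (x ∈ Y ↔ y ∉ Y) := by
    intro x hx y hy hxy
    have hxu : x ≠ u := fun h => hu (h ▸ hx)
    have hyu : y ≠ u := fun h => hu (h ▸ hy)
    constructor
    · exact fun h h' => hI x (by simp [h]) y (by simp [h']) hxy
    · intro h
      by_contra h'
      exact hJ x (by simp [hxu, h']) y (by simp [hyu, h]) hxy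
  obtain ⟨y, hy⟩ : Y.Nonempty := Finset.card_pos.1 (by omega)
  obtain ⟨x, l, rfl⟩ := hYC y hy
  have hch : (x :: y :: (l ++ [x])).IsChain G.Adj := hC.chain
  have hnd : (x :: y :: l).Nodup := hC.nodup
  have hxY : x ∉ Y := fun h =>
    (hYx x (by simp) y (by simp) (List.isChain_cons_cons.1 hch).1).1 h hy
  match l with
  | [] =>
    have hsub : Y ⊆ {y} := by
      intro z hz
      have := hYmem z hz
      simp only [Cycle.mem_coe_iff, List.mem_cons, List.not_mem_nil, or_false] at this
      rcases this with rfl | rfl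
      · exact absurd hz hxY
      · simp
    have := Finset.card_le_card hsub
    rw [Finset.card_singleton] at this
    omega
  | [z] =>
    simp only [List.cons_append, List.nil_append, List.isChain_cons_cons] at hch
    have h₁ := hYx y (by simp) z (by simp) hch.2.1
    have h₂ := hYx z (by simp) x (by simp) hch.2.2.1
    tauto
  | z :: z' :: l =>
    simp only [List.cons_append, List.isChain_cons_cons] at hch
    have h₁ := hYx y (by simp) z (by simp) hch.2.1
    have h₂ := hYx z (by simp) z' (by simp) hch.2.2.1
    have hzY : z ∉ Y := h₁.1 hy
    have hzY' : z' ∈ Y := by tauto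
    have huw : u ≠ w := fun h => hwJ (by simp [h])
    have hlen := hC.length_le ↑(x :: u :: z :: y :: w :: z' :: l)
      (by
        rw [Cycle.mem_coe_iff] at hu hwC
        rw [Cycle.nodup_coe_iff]
        simp only [List.nodup_cons, List.mem_cons, not_or] at hu hwC hnd ⊢
        clear * - hu hwC hnd huw
        grind)
      (by
        rw [Cycle.chain_coe_cons]
        simp only [List.cons_append, List.isChain_cons_cons]
        exact ⟨(hux x (by simp) hxY).symm, hux z (by simp) hzY, hch.2.1.symm, (hwY y hy).symm,
          hwY z' hzY', hch.2.2.2⟩)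
    simp at hlen

section Degree

variable [DecidableRel G.Adj]

/-- The degree sum over an independent set counts the edges to its complement. -/
lemma sum_degree_add_sum_eq_of_independent [DecidableEq V] {I : Finset V}
    (hI : ∀ u ∈ I, ∀ v ∈ I, ¬ G.Adj u v) :
    ∑ v ∈ I, G.degree v + ∑ v ∈ Iᶜ, (G.neighborFinset v ∩ Iᶜ).card = ∑ v ∈ Iᶜ, G.degree v := by
  have h₁ : ∑ v ∈ I, G.degree v = ∑ v ∈ Iᶜ, (G.neighborFinset v ∩ I).card := by
    have h := Finset.sum_card_bipartiteAbove_eq_sum_card_bipartiteBelow (s := I) (t := Iᶜ) G.Adj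
    have e₁ : ∀ v ∈ I, G.degree v = (Finset.bipartiteAbove G.Adj Iᶜ v).card := by
      intro v hv
      rw [← card_neighborFinset_eq_degree]
      congr 1
      ext w
      simp only [mem_neighborFinset, Finset.mem_bipartiteAbove, Finset.mem_compl]
      exact ⟨fun h => ⟨fun hw => hI v hv w hw h, h⟩, And.right⟩
    have e₂ : ∀ v ∈ Iᶜ, (G.neighborFinset v ∩ I).card = (Finset.bipartiteBelow G.Adj I v).card := by
      intro v _
      congr 1
      ext w
      simp [Finset.mem_bipartiteBelow, G.adj_comm, and_comm]
    rw [Finset.sum_congr rfl e₁, Finset.sum_congr rfl e₂, h]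
  rw [h₁, ← Finset.sum_add_distrib]
  refine Finset.sum_congr rfl fun v _ => ?_
  rw [← card_neighborFinset_eq_degree, ← Finset.card_inter_add_card_sdiff (G.neighborFinset v) I,
    Finset.sdiff_eq_inter_compl]

/-- In a `d`-regular graph with at most `#I * d` edges, the complement of the independent set `I`
is independent of the same size. -/
lemma compl_independent_of_card_edgeFinset_le [DecidableEq V] {I : Finset V}
    (hI : ∀ u ∈ I, ∀ v ∈ I, ¬ G.Adj u v) {d : ℕ} (hd : 0 < d) (hreg : ∀ v, G.degree v = d)
    (he : G.edgeFinset.card ≤ I.card * d) :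
    Iᶜ.card = I.card ∧ ∀ u ∉ I, ∀ v ∉ I, ¬ G.Adj u v := by
  have hsum := sum_degree_add_sum_eq_of_independent hI
  have htot := G.sum_degrees_eq_twice_card_edges
  rw [← Finset.sum_add_sum_compl I] at htot
  simp only [hreg, Finset.sum_const, smul_eq_mul] at hsum htot
  have hzero : ∑ v ∈ Iᶜ, (G.neighborFinset v ∩ Iᶜ).card = 0 := by omega
  refine ⟨Nat.eq_of_mul_eq_mul_right hd (by omega), fun u hu v hv huv => ?_⟩
  have := Finset.sum_eq_zero_iff.1 hzero u (by simpa using hu)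
  rw [Finset.card_eq_zero, Finset.eq_empty_iff_forall_notMem] at this
  exact this v (by simp [huv, hv])

lemma card_mul_minDegree_le_card_edgeFinset [DecidableEq V] {I : Finset V}
    (hI : ∀ u ∈ I, ∀ v ∈ I, ¬ G.Adj u v) : I.card * G.minDegree ≤ G.edgeFinset.card := by
  have hsum := sum_degree_add_sum_eq_of_independent hI
  have htot := G.sum_degrees_eq_twice_card_edges
  rw [← Finset.sum_add_sum_compl I] at htot
  have := Finset.card_nsmul_le_sum I (fun v => G.degree v) G.minDegree
    fun v _ => G.minDegree_le_degree v
  rw [smul_eq_mul] at this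
  omega

lemma card_div_maxDegree_le_invDegree (hδ : 1 ≤ G.minDegree) :
    (Fintype.card V : ℝ) / G.maxDegree ≤ invDegree G := by
  have : ∀ v ∈ (Finset.univ : Finset V), (1 : ℝ) / G.maxDegree ≤ 1 / G.degree v := by
    intro v _
    have h₁ : 0 < G.degree v := hδ.trans (G.minDegree_le_degree v)
    have h₂ := G.degree_le_maxDegree v
    gcongr
  have := Finset.card_nsmul_le_sum _ _ _ this
  rw [nsmul_eq_mul, Finset.card_univ] at this
  rw [invDegree, div_eq_mul_one_div]
  exact this

/-- The inverse degree bound in polynomial form. -/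
lemma sq_maxDegree_add_sq_card_edgeFinset_le {m : ℝ} (hm : 0 < m) (hδ : 1 ≤ G.minDegree)
    (hΔ : 0 < G.maxDegree)
    (h : invDegree G ≤ ((Fintype.card V : ℝ) - m) / G.maxDegree
        + (2 * m ^ 2 * (G.minDegree : ℝ) ^ 2 - (G.edgeFinset.card : ℝ) ^ 2)
          / (m * (G.maxDegree : ℝ) ^ 3)) :
    m ^ 2 * (G.maxDegree : ℝ) ^ 2 + (G.edgeFinset.card : ℝ) ^ 2
      ≤ 2 * m ^ 2 * (G.minDegree : ℝ) ^ 2 := by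
  have hΔ' : (0 : ℝ) < G.maxDegree := by exact_mod_cast hΔ
  have h₁ := (card_div_maxDegree_le_invDegree hδ).trans h
  rw [sub_div] at h₁
  have h₂ : m / G.maxDegree ≤ (2 * m ^ 2 * (G.minDegree : ℝ) ^ 2 - (G.edgeFinset.card : ℝ) ^ 2)
      / (m * (G.maxDegree : ℝ) ^ 3) := by linarith
  rw [le_div_iff₀ (by positivity)] at h₂
  have h₃ : m / G.maxDegree * (m * (G.maxDegree : ℝ) ^ 3) = m ^ 2 * (G.maxDegree : ℝ) ^ 2 := by
    field_simp
  linarith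

end Degree

end Finite

end SimpleGraph

/-- If `G` is a `k`-connected (`k ≥ 2`) graph with `n ≥ 3` vertices, `e` edges, minimum degree
`δ ≥ 1`, and maximum degree `Δ`, and `Inv(G) ≤ (n − k − 1)/Δ + (2(k+1)²δ² − e²)/((k+1)Δ³)`,
then `G` is Hamiltonian. -/
theorem stmt9 {V : Type*} [Fintype V] [DecidableEq V] (G : SimpleGraph V) [DecidableRel G.Adj]
    (k : ℕ) (hk : 2 ≤ k) (hconn : IsKConnected G k) (hn : 3 ≤ Fintype.card V)
    (hδ : 1 ≤ G.minDegree)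
    (h : invDegree G ≤ ((Fintype.card V : ℝ) - k - 1) / (G.maxDegree : ℝ)
        + (2 * ((k : ℝ) + 1) ^ 2 * (G.minDegree : ℝ) ^ 2 - (G.edgeFinset.card : ℝ) ^ 2)
          / (((k : ℝ) + 1) * (G.maxDegree : ℝ) ^ 3)) :
    G.IsHamiltonian := by
  have hΔ : G.minDegree ≤ G.maxDegree := G.minDegree_le_maxDegree
  have hpoly := SimpleGraph.sq_maxDegree_add_sq_card_edgeFinset_le (G := G) (m := (k : ℝ) + 1)
    (by positivity) hδ (by omega) (by rwa [← sub_sub])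
  obtain ⟨C, hC⟩ := G.exists_isLongestCycle
  by_cases hall : ∀ v, v ∈ C
  · exact hC.isHamiltonian_of_forall_mem hn hall
  push Not at hall
  obtain ⟨u, hu⟩ := hall
  exfalso
  obtain ⟨b, hb⟩ : ∃ b, G.Adj u b :=
    (G.degree_pos_iff_exists_adj u).1 (hδ.trans (G.minDegree_le_degree u))
  obtain ⟨c, hc⟩ := hC.exists_mem hb
  obtain ⟨Y₀, hY₀, hsucc, hind, hout⟩ := hC.exists_independent_successors hconn hc hu
  obtain ⟨Y, hYsub, hYcard⟩ := Finset.exists_subset_card_eq hY₀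
  have huY : u ∉ Y := by
    intro h
    obtain ⟨x, l, rfl⟩ := hsucc u (hYsub h)
    exact hu (by simp)
  have hI : ∀ y ∈ insert u Y, ∀ z ∈ insert u Y, ¬ G.Adj y z := by
    have hYu : ∀ y ∈ Y, ¬ G.Adj y u := fun y hy => hout y (hYsub hy) u (.refl hu)
    intro y hy z hz
    rcases Finset.mem_insert.1 hy with rfl | hyY <;> rcases Finset.mem_insert.1 hz with rfl | hzY
    · exact G.irrefl
    · exact fun h => hYu z hzY h.symm
    · exact hYu y hyY
    · exact hind y (hYsub hyY) z (hYsub hzY)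
  have hIcard : (insert u Y).card = k + 1 := by rw [Finset.card_insert_of_notMem huY, hYcard]
  have hle := SimpleGraph.card_mul_minDegree_le_card_edgeFinset hI
  rw [hIcard] at hle
  have hpoly' : (k + 1) ^ 2 * G.maxDegree ^ 2 + G.edgeFinset.card ^ 2
      ≤ 2 * (k + 1) ^ 2 * G.minDegree ^ 2 := by exact_mod_cast hpoly
  have hsq : ((k + 1) * G.minDegree) ^ 2 ≤ G.edgeFinset.card ^ 2 := Nat.pow_le_pow_left hle 2
  have hΔδ : (k + 1) * G.maxDegree ≤ (k + 1) * G.minDegree :=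
    (Nat.pow_le_pow_iff_left two_ne_zero).1 (by nlinarith)
  have hΔδ' : G.maxDegree ≤ G.minDegree := Nat.le_of_mul_le_mul_left hΔδ (by omega)
  have hreg : ∀ v, G.degree v = G.minDegree := fun v =>
    le_antisymm ((G.degree_le_maxDegree v).trans hΔδ') (G.minDegree_le_degree v)
  have he : G.edgeFinset.card ≤ (insert u Y).card * G.minDegree := by
    rw [hIcard]
    have := Nat.pow_le_pow_left hΔ 2
    refine (Nat.pow_le_pow_iff_left two_ne_zero).1 ?_
    nlinarith
  obtain ⟨hJcard, hJ⟩ := SimpleGraph.compl_independent_of_card_edgeFinset_le hI hδ hreg he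
  exact hC.false_of_independent_compl hk hconn.le_degree hu hYcard
    (fun y hy => hsucc y (hYsub hy)) hI (fun y hy => hout y (hYsub hy)) (hJcard.trans hIcard) hJ
end

section
/- Let G be a k-connected (k ≥ 2) finite simple graph with n ≥ 3 vertices, e edges, minimum degree δ ≥ 1, and maximum degree Δ. If Inv(G) ≤ (n − k − 1)/Δ + (1/((k + 1)·Δ³))·( 2(k + 1)·((k + 1)·δ² + e²/(n − k − 1)) − e² − 2(k + 1)·(n − k − 1)·Δ² ), then G is Hamiltonian. -/
open Finset

namespace SimpleGraph

variable {V : Type*} {G : SimpleGraph V}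

/-- A list of distinct vertices that traverses a cycle of `G`; a single edge, traversed back and
forth, is allowed. -/
structure IsCyclicList (G : SimpleGraph V) (l : List V) : Prop where
  ne_nil : l ≠ []
  nodup : l.Nodup
  isChain : l.IsChain G.Adj
  closes : ∀ x ∈ l.getLast?, ∀ y ∈ l.head?, G.Adj x y

namespace IsCyclicList

theorem append_comm {l₁ l₂ : List V} (h : G.IsCyclicList (l₁ ++ l₂)) :
    G.IsCyclicList (l₂ ++ l₁) := by
  rcases eq_or_ne l₁ [] with rfl | h₁
  · simpa using h
  rcases eq_or_ne l₂ [] with rfl | h₂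
  · simpa using h
  obtain ⟨-, hnd, hch, hcl⟩ := h
  rw [List.isChain_append] at hch
  refine ⟨by simp [h₁], List.nodup_append_comm.1 hnd, ?_, ?_⟩
  · rw [List.isChain_append]
    refine ⟨hch.2.1, hch.1, ?_⟩
    simpa [List.getLast?_append_of_ne_nil _ h₂, List.head?_append_of_ne_nil _ h₁] using hcl
  · simpa [List.getLast?_append_of_ne_nil _ h₁, List.head?_append_of_ne_nil _ h₂] using hch.2.2

/-- Rotate a cyclic list so that a given vertex comes last. -/
theorem exists_rotated_concat {l : List V} (h : G.IsCyclicList l) {x : V} (hx : x ∈ l) :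
    ∃ t, (t ++ [x]) ~r l ∧ G.IsCyclicList (t ++ [x]) := by
  obtain ⟨s, t, rfl⟩ := List.append_of_mem hx
  refine ⟨t ++ s, ?_, ?_⟩
  · have := @List.isRotated_append _ t (s ++ [x])
    simpa using this
  · have : G.IsCyclicList ((s ++ [x]) ++ t) := by simpa using h
    simpa using this.append_comm

/-- A path joining a neighbour of the last vertex to a neighbour of the first one, off the cycle,
extends the cycle. -/
theorem append {l p : List V} (h : G.IsCyclicList l) (hp : p ≠ []) (hnd : p.Nodup)
    (hch : p.IsChain G.Adj) (hd : l.Disjoint p)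
    (h₁ : ∀ x ∈ l.getLast?, ∀ y ∈ p.head?, G.Adj x y)
    (h₂ : ∀ x ∈ p.getLast?, ∀ y ∈ l.head?, G.Adj x y) : G.IsCyclicList (l ++ p) where
  ne_nil := by simp [hp]
  nodup := List.nodup_append'.2 ⟨h.nodup, hnd, hd⟩
  isChain := List.isChain_append.2 ⟨h.isChain, hch, h₁⟩
  closes := by
    simpa [List.getLast?_append_of_ne_nil _ hp, List.head?_append_of_ne_nil _ h.ne_nil] using h₂

/-- The exchange that replaces the two cycle edges leaving `x` and `y` by the chord joining the
successors of `x` and `y` and a path off the cycle joining `y` to `x`. -/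
theorem exchange {l₁ l₂ p : List V} (h : G.IsCyclicList (l₁ ++ l₂)) (hl₁ : l₁ ≠ [])
    (hl₂ : l₂ ≠ []) (hp : p ≠ []) (hnd : p.Nodup) (hch : p.IsChain G.Adj)
    (hd : (l₁ ++ l₂).Disjoint p)
    (h₁ : ∀ x ∈ l₁.getLast?, ∀ y ∈ p.head?, G.Adj x y)
    (h₂ : ∀ x ∈ p.getLast?, ∀ y ∈ l₂.getLast?, G.Adj x y)
    (h₃ : ∀ x ∈ l₂.head?, ∀ y ∈ l₁.head?, G.Adj x y) :
    G.IsCyclicList (l₁ ++ (p ++ l₂.reverse)) := by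
  obtain ⟨-, hnd', hch', -⟩ := h
  rw [List.isChain_append] at hch'
  rw [List.nodup_append'] at hnd'
  rw [List.disjoint_append_left] at hd
  refine ⟨by simp [hp], ?_, ?_, ?_⟩
  · rw [List.nodup_append', List.nodup_append', List.disjoint_append_right]
    refine ⟨hnd'.1, ⟨hnd, List.nodup_reverse.2 hnd'.2.1, ?_⟩, hd.1, ?_⟩
    · intro a ha hb
      exact hd.2 (List.mem_reverse.1 hb) ha
    · intro a ha hb
      exact hnd'.2.2 ha (List.mem_reverse.1 hb)
  · rw [List.isChain_append, List.isChain_append, List.isChain_reverse]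
    refine ⟨hch'.1, ⟨hch, hch'.2.1.imp fun _ _ h ↦ h.symm, by simpa using h₂⟩, ?_⟩
    simpa [List.head?_append_of_ne_nil _ hp] using h₁
  · have : l₂.reverse ≠ [] := by simpa using hl₂
    rw [List.getLast?_append_of_ne_nil _ (by simp [hp]), List.getLast?_append_of_ne_nil _ this,
      List.head?_append_of_ne_nil _ hl₁]
    simpa using h₃

theorem isHamiltonian [Fintype V] [DecidableEq V] {l : List V} (h : G.IsCyclicList l)
    (hl : 3 ≤ l.length) (hmem : ∀ v, v ∈ l) : G.IsHamiltonian := by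
  intro _
  let p := Walk.ofSupport l h.ne_nil h.isChain
  have hsupp : p.support = l := Walk.support_ofSupport _ _
  have hadj : G.Adj (l.getLast h.ne_nil) (l.head h.ne_nil) :=
    h.closes _ (List.getLast_mem_getLast? _) _ (List.head_mem_head? _)
  have hpath : p.IsPath := Walk.IsPath.mk' (by rw [hsupp]; exact h.nodup)
  have hlen : p.length + 1 = l.length := by rw [← Walk.length_support, hsupp]
  refine ⟨_, Walk.cons hadj p, ?_, ?_⟩
  · rw [Walk.isCycle_iff_isPath_tail_and_le_length]
    exact ⟨by simpa using hpath, by rw [Walk.length_cons, hlen]; exact hl⟩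
  · refine Walk.IsPath.isHamiltonian_of_mem ?_ fun w ↦ ?_
    · simpa using hpath
    · simpa [hsupp] using hmem w

/-- The vertices of a closed walk given by a function on the natural numbers. -/
theorem of_function {f : ℕ → V} {m : ℕ} (hm : 0 < m) (hadj : ∀ i, G.Adj (f i) (f (i + 1)))
    (hclose : f m = f 0) (hinj : Set.InjOn f (Set.Iio m)) :
    G.IsCyclicList ((List.range m).map f) where
  ne_nil := by simpa using hm.ne'
  nodup := List.nodup_range.map_on fun x hx y hy h ↦ hinj (by simpa using hx) (by simpa using hy) h
  isChain := by
    rw [List.isChain_map, List.isChain_range]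
    exact fun i _ ↦ hadj i
  closes := by
    obtain ⟨m, rfl⟩ := Nat.exists_eq_add_of_lt hm
    intro x hx y hy
    have := hadj m
    simp [List.getLast?_range, List.head?_range] at hx hy
    simp at hclose
    rw [← hx, ← hy, ← hclose]
    exact this

theorem exists_path_list {s : Set V} {a b : s} (hab : (G.induce s).Reachable a b) :
    ∃ p : List V, p ≠ [] ∧ p.Nodup ∧ p.IsChain G.Adj ∧ p.head? = some ↑a ∧
      p.getLast? = some ↑b ∧ ∀ x ∈ p, x ∈ s := by
  classical
  obtain ⟨q⟩ := hab
  refine ⟨q.toPath.1.support.map Subtype.val,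
    List.map_eq_nil_iff.not.2 (Walk.support_ne_nil _), ?_, ?_, ?_, ?_, ?_⟩
  · exact q.toPath.2.support_nodup.map Subtype.val_injective
  · exact List.isChain_map_of_isChain Subtype.val (fun _ _ h ↦ h) q.toPath.1.isChain_adj_support
  · rw [List.head?_map, List.head?_eq_some_head (Walk.support_ne_nil _)]
    simp
  · rw [List.getLast?_map, List.getLast?_eq_some_getLast (Walk.support_ne_nil _)]
    simp
  · intro x hx
    obtain ⟨y, -, rfl⟩ := List.mem_map.1 hx
    exact y.2

/-- A cyclic list of maximal length admits no detour from its last to its first vertex. -/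
theorem not_adj_of_maximal [DecidableEq V] {l : List V} (h : G.IsCyclicList l)
    (hmax : ∀ l', G.IsCyclicList l' → l'.length ≤ l.length) {a b : V} (ha : a ∉ l) (hb : b ∉ l)
    (hab : (G.induce {x | x ∉ l}).Reachable ⟨a, ha⟩ ⟨b, hb⟩) {x : V} (hx : x ∈ l)
    (hxa : G.Adj x a) : ¬ G.Adj b (l.formPerm x) := by
  intro hbx
  obtain ⟨p, hp, hnd, hch, hhd, hlast, hoff⟩ := exists_path_list hab
  obtain ⟨t, hrot, ht⟩ := h.exists_rotated_concat hx
  have hnext : (t ++ [x]).head? = some (l.formPerm x) := by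
    rw [← List.formPerm_eq_of_isRotated ht.nodup hrot]
    cases t <;> simp
  have := hmax _ (ht.append hp hnd hch (fun z hz hz' ↦ hoff z hz' (hrot.mem_iff.1 hz))
    (by simpa [hhd] using hxa) (by simpa [hnext, hlast] using hbx))
  rw [List.length_append, hrot.perm.length_eq] at this
  have := List.length_pos_of_ne_nil hp
  omega

/-- On a cyclic list of maximal length, the successors of two vertices joined by a path off the
list are not adjacent. -/
theorem not_adj_formPerm_of_maximal [DecidableEq V] {l : List V} (h : G.IsCyclicList l)
    (hmax : ∀ l', G.IsCyclicList l' → l'.length ≤ l.length) {a b : V} (ha : a ∉ l) (hb : b ∉ l)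
    (hab : (G.induce {x | x ∉ l}).Reachable ⟨a, ha⟩ ⟨b, hb⟩) {x y : V} (hx : x ∈ l) (hy : y ∈ l)
    (hxy : x ≠ y) (hya : G.Adj y a) (hxb : G.Adj x b) :
    ¬ G.Adj (l.formPerm x) (l.formPerm y) := by
  intro hadj
  obtain ⟨p, hp, hnd, hch, hhd, hlast, hoff⟩ := exists_path_list hab
  obtain ⟨t, hrot, ht⟩ := h.exists_rotated_concat hx
  have hyt : y ∈ t := by simpa [hxy.symm] using hrot.mem_iff.2 hy
  obtain ⟨s, u, rfl⟩ := List.append_of_mem hyt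
  have heq : s ++ y :: u ++ [x] = (s ++ [y]) ++ (u ++ [x]) := by simp
  rw [heq] at ht hrot
  have hperm := List.formPerm_eq_of_isRotated ht.nodup hrot
  have hnextx : (s ++ [y]).head? = some (l.formPerm x) := by
    rw [← hperm]
    cases s <;> simp [← List.append_assoc]
  have hnexty : (u ++ [x]).head? = some (l.formPerm y) := by
    rw [← hperm]
    have := List.formPerm_apply_lt_getElem _ ht.nodup s.length (by simp)
    cases u <;> simpa using this.symm
  have := hmax _ (ht.exchange (by simp) (by simp) hp hnd hch
    (fun z hz hz' ↦ hoff z hz' (hrot.mem_iff.1 hz))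
    (by simpa [hhd] using hya) (by simpa [hlast] using hxb.symm)
    (by simpa [hnextx, hnexty] using hadj.symm))
  have hlen := hrot.perm.length_eq
  simp only [List.length_append, List.length_reverse] at this hlen
  have := List.length_pos_of_ne_nil hp
  omega

end IsCyclicList

/-- The **Chvátal–Erdős theorem**: a non-Hamiltonian `k`-connected graph has an independent set
of `k + 1` vertices. -/
theorem exists_isIndepSet_of_not_isHamiltonian [Fintype V] [DecidableEq V] {k : ℕ} (hk : 2 ≤ k)
    (hconn : IsKConnected G k) (hn : 3 ≤ Fintype.card V) (hG : ¬ G.IsHamiltonian) :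
    ∃ I : Finset V, #I = k + 1 ∧ G.IsIndepSet I := by
  classical
  obtain ⟨l, hl, hmax⟩ : ∃ l, G.IsCyclicList l ∧
      ∀ l', G.IsCyclicList l' → l'.length ≤ l.length := by
    have hedge : ∃ a b, G.Adj a b := by
      have hc := hconn.2 ∅ (by simp; omega)
      obtain ⟨a, b, hab⟩ := Fintype.exists_pair_of_one_lt_card (α := V) (by omega)
      obtain ⟨q⟩ := hc.preconnected ⟨a, by simp⟩ ⟨b, by simp⟩
      cases q with
      | nil => exact absurd rfl hab
      | cons h _ => exact ⟨_, _, h⟩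
    obtain ⟨a, b, hab⟩ := hedge
    have hex : ∃ m, ∃ l, G.IsCyclicList l ∧ l.length = m :=
      ⟨2, [a, b], ⟨by simp, by simpa using hab.ne, by simpa using hab, by simpa using hab.symm⟩,
        rfl⟩
    have hbdd : ∀ m, (∃ l, G.IsCyclicList l ∧ l.length = m) → m ≤ Fintype.card V := by
      rintro _ ⟨l, hl, rfl⟩
      exact hl.nodup.length_le_card
    obtain ⟨m₀, hm₀⟩ := hex
    obtain ⟨l, hl, hlen⟩ := Nat.findGreatest_spec
      (P := fun m ↦ ∃ l, G.IsCyclicList l ∧ l.length = m) (hbdd _ hm₀) hm₀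
    refine ⟨l, hl, fun l' hl' ↦ ?_⟩
    rw [hlen]
    exact Nat.le_findGreatest (hbdd _ ⟨l', hl', rfl⟩) ⟨l', hl', rfl⟩
  obtain ⟨v, hv⟩ : ∃ v, v ∉ l := by
    by_contra! hall
    refine hG (hl.isHamiltonian ?_ hall)
    have : l.toFinset = Finset.univ := by ext; simp [hall]
    rw [← List.toFinset_card_of_nodup hl.nodup, this, Finset.card_univ]
    exact hn
  let H : V → Prop := fun u ↦ ∃ hu : u ∉ l, (G.induce {x | x ∉ l}).Reachable ⟨v, hv⟩ ⟨u, hu⟩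
  let S : Finset V := {x | x ∈ l ∧ ∃ u, H u ∧ G.Adj x u}
  have hSl : ∀ x ∈ S, x ∈ l := fun x hx ↦ (Finset.mem_filter.1 hx).2.1
  have hsucc : ∀ x ∈ S, ∀ u, H u → ¬ G.Adj u (l.formPerm x) := by
    intro x hx u ⟨hu, hvu⟩
    obtain ⟨-, hxl, w, ⟨hw, hvw⟩, hxw⟩ := Finset.mem_filter.1 hx
    exact hl.not_adj_of_maximal hmax hw hu (hvw.symm.trans hvu) hxl hxw
  have hSk : k ≤ #S := by
    by_contra! hlt
    have hc := hconn.2 S hlt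
    have hclosed : ∀ a b : ((↑S : Set V)ᶜ : Set V), (G.induce (↑S : Set V)ᶜ).Reachable a b →
        H a → H b := by
      rintro a b ⟨q⟩ ha
      induction q with
      | nil => exact ha
      | @cons a c b hac q ih =>
        refine ih ?_
        obtain ⟨hal, hva⟩ := ha
        have hac' : G.Adj a c := hac
        have hcl : (c : V) ∉ l := fun hcl ↦
          c.2 (Finset.mem_coe.2 (Finset.mem_filter.2
            ⟨Finset.mem_univ _, hcl, a, ⟨hal, hva⟩, hac'.symm⟩))
        exact ⟨hcl, hva.trans (Adj.reachable (G := G.induce {x | x ∉ l})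
          (u := ⟨a, hal⟩) (v := ⟨c, hcl⟩) hac')⟩
    have hHv : H v := ⟨hv, Reachable.refl _⟩
    have hvS : v ∉ S := fun h ↦ hv (hSl v h)
    have hall : ∀ x ∈ l, x ∈ S := by
      intro x hx
      by_contra hxS
      obtain ⟨hxl, -⟩ := hclosed ⟨v, by simpa using hvS⟩ ⟨x, by simpa using hxS⟩
        (hc.preconnected _ _) hHv
      exact hxl hx
    obtain ⟨x, hx⟩ := List.exists_mem_of_ne_nil _ hl.ne_nil
    have hx' := List.formPerm_apply_mem_of_mem hx
    obtain ⟨-, -, u, hu, hadj⟩ := Finset.mem_filter.1 (hall _ hx')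
    exact hsucc x (hall x hx) u hu hadj.symm
  have hvI : v ∉ S.image l.formPerm := by
    intro h
    obtain ⟨x, hx, rfl⟩ := Finset.mem_image.1 h
    exact hv (List.formPerm_apply_mem_of_mem (hSl x hx))
  have hcard : k + 1 ≤ #(insert v (S.image l.formPerm)) := by
    rw [Finset.card_insert_of_notMem hvI, Finset.card_image_of_injective _ l.formPerm.injective]
    omega
  have hind : G.IsIndepSet (insert v (S.image l.formPerm) : Finset V) := by
    have hvx : ∀ x ∈ S, ¬ G.Adj v (l.formPerm x) := fun x hx ↦
      hsucc x hx v ⟨hv, Reachable.refl _⟩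
    rw [Finset.coe_insert, isIndepSet_iff, Set.pairwise_insert]
    refine ⟨?_, ?_⟩
    · simp only [Finset.coe_image]
      rintro _ ⟨x, hx, rfl⟩ _ ⟨y, hy, rfl⟩ hne
      obtain ⟨-, hxl, b, ⟨hb, hvb⟩, hxb⟩ := Finset.mem_filter.1 hx
      obtain ⟨-, hyl, a, ⟨ha, hva⟩, hya⟩ := Finset.mem_filter.1 hy
      exact hl.not_adj_formPerm_of_maximal hmax ha hb (hva.symm.trans hvb) hxl hyl
        (fun h ↦ hne (by rw [h])) hya hxb
    · intro w hw _
      obtain ⟨x, hx, rfl⟩ := Finset.mem_image.1 hw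
      exact ⟨hvx x hx, fun h ↦ hvx x hx h.symm⟩
  obtain ⟨I, hI, hIcard⟩ := Finset.exists_subset_card_eq hcard
  exact ⟨I, hIcard, hind.mono (by exact_mod_cast hI)⟩

/-- A balanced bipartite graph that is complete up to a matching is Hamiltonian. -/
theorem isHamiltonian_of_adj_matching [Fintype V] [DecidableEq V] {A : Finset V} {m : ℕ}
    (hm : 3 ≤ m) (hA : #A = m) (hV : Fintype.card V = 2 * m) (g : V → V)
    (hgA : ∀ a ∈ A, g a ∉ A) (hg : Set.InjOn g A)
    (hadj : ∀ a ∈ A, ∀ b ∈ A, a ≠ b → G.Adj a (g b)) : G.IsHamiltonian := by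
  have : NeZero m := ⟨by omega⟩
  let e : ZMod m ≃ A := Fintype.equivOfCardEq (by rw [ZMod.card, Fintype.card_coe, hA])
  have h1 : (1 : ZMod m) ≠ 0 := by
    have := (ZMod.natCast_eq_zero_iff 1 m).not.2 (Nat.not_dvd_of_pos_of_lt (by omega) (by omega))
    simpa using this
  have h2 : (2 : ZMod m) ≠ 0 := by
    have := (ZMod.natCast_eq_zero_iff 2 m).not.2 (Nat.not_dvd_of_pos_of_lt (by omega) (by omega))
    simpa using this
  have hval : ∀ {i j : ZMod m}, (e i : V) = e j → i = j := fun h ↦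
    e.injective (Subtype.ext h)
  let f : ℕ → V := fun i ↦ if i % 2 = 0 then (e (i / 2 : ℕ) : V) else g (e ((i / 2 : ℕ) - 1))
  have hf0 : ∀ i, f (2 * i) = e (i : ZMod m) := fun i ↦ by simp [f]
  have hf1 : ∀ i, f (2 * i + 1) = g (e ((i : ZMod m) - 1)) := fun i ↦ by
    have : (2 * i + 1) / 2 = i := by omega
    simp [f, this, Nat.add_mod]
  have hcast : ∀ {i j : ℕ}, i < m → j < m → (i : ZMod m) = j → i = j := fun hi hj h ↦ by
    have := congrArg ZMod.val h
    rwa [ZMod.val_natCast_of_lt hi, ZMod.val_natCast_of_lt hj] at this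
  have hstep : ∀ i, G.Adj (f i) (f (i + 1)) := by
    intro i
    obtain ⟨j, rfl | rfl⟩ := i.even_or_odd'
    · rw [hf0, hf1]
      refine hadj _ (e _).2 _ (e _).2 fun h ↦ h1 ?_
      have := hval h
      linear_combination this
    · rw [show 2 * j + 1 + 1 = 2 * (j + 1) by ring, hf0, hf1]
      refine (hadj _ (e _).2 _ (e _).2 fun h ↦ h2 ?_).symm
      have := hval h
      push_cast at this
      linear_combination this
  have hinj : Set.InjOn f (Set.Iio (2 * m)) := by
    intro i hi j hj hij
    rw [Set.mem_Iio] at hi hj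
    obtain ⟨i, rfl | rfl⟩ := i.even_or_odd' <;> obtain ⟨j, rfl | rfl⟩ := j.even_or_odd'
    · rw [hf0, hf0] at hij
      rw [hcast (by omega) (by omega) (hval hij)]
    · rw [hf0, hf1] at hij
      exact absurd (hij ▸ (e _).2) (hgA _ (e _).2)
    · rw [hf0, hf1] at hij
      exact absurd (hij ▸ (e _).2) (hgA _ (e _).2)
    · rw [hf1, hf1] at hij
      have := hval (hg (e _).2 (e _).2 hij)
      rw [hcast (by omega) (by omega) (sub_left_injective this)]
  have hl := IsCyclicList.of_function (m := 2 * m) (by omega) hstep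
    (by rw [hf0, ← mul_zero 2, hf0]; simp) hinj
  refine hl.isHamiltonian (by simp; omega) fun v ↦ ?_
  have : ((List.range (2 * m)).map f).toFinset = Finset.univ := by
    rw [← Finset.card_eq_iff_eq_univ, List.toFinset_card_of_nodup hl.nodup, hV]
    simp
  rw [← List.mem_toFinset, this]
  exact Finset.mem_univ v

/-- A balanced bipartite graph with parts of size `k + 1 ≥ 3`, regular of degree at least `k`,
is Hamiltonian. -/
theorem isHamiltonian_of_isIndepSet_compl [Fintype V] [DecidableEq V] [DecidableRel G.Adj]
    {A : Finset V} {k r : ℕ} (hk : 2 ≤ k) (hA : #A = k + 1)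
    (hV : Fintype.card V = 2 * (k + 1)) (hind : G.IsIndepSet A) (hind' : G.IsIndepSet ↑Aᶜ)
    (hreg : G.IsRegularOfDegree r) (hr : k ≤ r) : G.IsHamiltonian := by
  have hAc : #Aᶜ = k + 1 := by rw [Finset.card_compl]; omega
  have hsub : ∀ {B C : Finset V}, (∀ v, v ∉ B → v ∈ C) → G.IsIndepSet B → ∀ a ∈ B,
      G.neighborFinset a ⊆ C := by
    intro B C hBC hB a ha b hb
    rw [mem_neighborFinset] at hb
    exact hBC b fun hbB ↦ hB ha hbB hb.ne hb
  have hsubA := hsub (C := Aᶜ) (fun v hv ↦ Finset.mem_compl.2 hv) hind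
  have hsubAc := hsub (C := A) (fun v hv ↦ by simpa using hv) hind'
  have hcardA : ∀ a ∈ A, #(Aᶜ \ G.neighborFinset a) = k + 1 - r := fun a ha ↦ by
    rw [Finset.card_sdiff_of_subset (hsubA a ha), hAc, card_neighborFinset_eq_degree, hreg a]
  have hcardAc : ∀ b ∈ Aᶜ, #(A \ G.neighborFinset b) = k + 1 - r := fun b hb ↦ by
    rw [Finset.card_sdiff_of_subset (hsubAc b hb), hA, card_neighborFinset_eq_degree, hreg b]
  obtain ⟨g, hgA, hg, hnon⟩ : ∃ g : V → V, (∀ a ∈ A, g a ∈ Aᶜ) ∧ Set.InjOn g A ∧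
      ∀ a ∈ A, ∀ b ∈ Aᶜ, ¬ G.Adj a b → b = g a := by
    rcases hr.eq_or_lt with rfl | hlt
    · have hex : ∀ a : V, ∃ b, a ∈ A → Aᶜ \ G.neighborFinset a = {b} := by
        intro a
        by_cases ha : a ∈ A
        · obtain ⟨b, hb⟩ := Finset.card_eq_one.1 ((hcardA a ha).trans (by omega))
          exact ⟨b, fun _ ↦ hb⟩
        · exact ⟨a, fun h ↦ absurd h ha⟩
      choose g hg using hex
      have hmem : ∀ a ∈ A, g a ∈ Aᶜ ∧ ¬ G.Adj a (g a) := by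
        intro a ha
        have : g a ∈ Aᶜ \ G.neighborFinset a := by simp [hg a ha]
        rwa [Finset.mem_sdiff, mem_neighborFinset] at this
      refine ⟨g, fun a ha ↦ (hmem a ha).1, fun a ha b hb hab ↦ ?_, fun a ha b hb hab ↦ ?_⟩
      · have hle : #(A \ G.neighborFinset (g a)) ≤ 1 := by
          rw [hcardAc _ (hmem a ha).1]; omega
        refine Finset.card_le_one.1 hle a ?_ b ?_
        · simpa [G.adj_comm] using And.intro ha (hmem a ha).2
        · rw [hab]
          simpa [G.adj_comm] using And.intro hb (hmem b hb).2
      · have : b ∈ Aᶜ \ G.neighborFinset a := by simpa [hab] using hb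
        simpa [hg a ha] using this
    · let e : A ≃ (Aᶜ : Finset V) := Fintype.equivOfCardEq (by
        rw [Fintype.card_coe, Fintype.card_coe, hA, hAc])
      refine ⟨fun a ↦ if ha : a ∈ A then e ⟨a, ha⟩ else a, fun a ha ↦ ?_, fun a ha b hb hab ↦ ?_,
        fun a ha b hb hab ↦ ?_⟩
      · simp only [ha, dif_pos]
        exact (e _).2
      · simp only [Finset.mem_coe.1 ha, Finset.mem_coe.1 hb, dif_pos] at hab
        simpa using e.injective (Subtype.ext hab)
      · have hb' : b ∈ Aᶜ \ G.neighborFinset a := by simpa [hab] using hb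
        have := hcardA a ha
        rw [Nat.sub_eq_zero_of_le hlt, Finset.card_eq_zero] at this
        simp [this] at hb'
  refine isHamiltonian_of_adj_matching (m := k + 1) (by omega) hA hV g
    (fun a ha ↦ Finset.mem_compl.1 (hgA a ha)) hg fun a ha b hb hab ↦ ?_
  by_contra hnadj
  exact hab (hg hb ha (hnon a ha _ (hgA b hb) hnadj)).symm

theorem le_degree_of_isKConnected [Fintype V] [DecidableEq V] [DecidableRel G.Adj] {k : ℕ}
    (hconn : IsKConnected G k) (v : V) : k ≤ G.degree v := by
  by_contra! hlt
  have hc := hconn.2 (G.neighborFinset v) (by simpa using hlt)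
  obtain ⟨w, hw⟩ : ∃ w, w ∉ insert v (G.neighborFinset v) := by
    by_contra! hall
    have h₁ := Finset.card_le_card (fun x _ ↦ hall x : Finset.univ ⊆ insert v (G.neighborFinset v))
    have h₂ := Finset.card_insert_le v (G.neighborFinset v)
    rw [card_neighborFinset_eq_degree] at h₂
    rw [Finset.card_univ] at h₁
    have := hconn.1
    omega
  rw [Finset.mem_insert, not_or] at hw
  obtain ⟨q⟩ := hc.preconnected ⟨v, by simp⟩ ⟨w, by simpa using hw.2⟩
  cases q with
  | nil => exact hw.1 rfl
  | @cons _ c _ hvc _ => exact c.2 (by simpa using (hvc : G.Adj v c))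

section Degrees

variable [Fintype V] [DecidableEq V] [DecidableRel G.Adj] {A : Finset V}

theorem card_biUnion_incidenceFinset_of_isIndepSet (hA : G.IsIndepSet A) :
    #(A.biUnion fun a ↦ G.incidenceFinset a) = ∑ a ∈ A, G.degree a := by
  rw [Finset.card_biUnion]
  · simp
  · intro a ha b hb hab
    refine Finset.disjoint_left.2 fun e hea heb ↦ ?_
    rw [mem_incidenceFinset] at hea heb
    exact hA ha hb hab (G.adj_of_mem_incidenceSet hab hea heb)

theorem biUnion_incidenceFinset_subset :
    (A.biUnion fun a ↦ G.incidenceFinset a) ⊆ G.edgeFinset :=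
  Finset.biUnion_subset.2 fun a _ ↦ G.incidenceFinset_subset a

theorem sum_degree_le_card_edgeFinset_of_isIndepSet (hA : G.IsIndepSet A) :
    ∑ a ∈ A, G.degree a ≤ #G.edgeFinset :=
  card_biUnion_incidenceFinset_of_isIndepSet hA ▸
    Finset.card_le_card biUnion_incidenceFinset_subset

/-- If the degrees over an independent set sum to the number of edges, then the complement of the
set is independent. -/
theorem isIndepSet_compl_of_card_edgeFinset_le (hA : G.IsIndepSet A)
    (h : #G.edgeFinset ≤ ∑ a ∈ A, G.degree a) : G.IsIndepSet ↑Aᶜ := by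
  intro x hx y hy _ hxy
  have heq := Finset.eq_of_subset_of_card_le (biUnion_incidenceFinset_subset (G := G) (A := A))
    (by rwa [card_biUnion_incidenceFinset_of_isIndepSet hA])
  have hmem : s(x, y) ∈ G.edgeFinset := by simpa using hxy
  rw [← heq, Finset.mem_biUnion] at hmem
  obtain ⟨a, ha, hae⟩ := hmem
  rw [mem_incidenceFinset] at hae
  rcases Sym2.mem_iff.1 hae.2 with rfl | rfl
  · exact (Finset.mem_compl.1 (by simpa using hx)) ha
  · exact (Finset.mem_compl.1 (by simpa using hy)) ha

end Degrees

end SimpleGraph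

theorem card_div_maxDegree_le_invDegree {V : Type*} [Fintype V] (G : SimpleGraph V)
    [DecidableRel G.Adj] (hδ : 1 ≤ G.minDegree) :
    (Fintype.card V : ℝ) / G.maxDegree ≤ invDegree G := by
  have : ∑ _u : V, 1 / (G.maxDegree : ℝ) ≤ invDegree G := by
    refine Finset.sum_le_sum fun u _ ↦ one_div_le_one_div_of_le ?_ ?_
    · exact_mod_cast hδ.trans (G.minDegree_le_degree u)
    · exact_mod_cast G.degree_le_maxDegree u
  simpa [div_eq_mul_inv] using this

/-- The equality case of the numerical hypothesis: `a` and `m` are the sizes of an independent set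
and of its complement, `d` and `D` the extreme degrees, and `e` the number of edges. -/
theorem eq_of_inv_bound {a m d D e : ℝ} (ha : 0 < a) (hm : 0 < m) (hd : 0 < d) (hdD : d ≤ D)
    (hade : a * d ≤ e) (hemD : e ≤ m * D)
    (h : (a + m) / D ≤ m / D + 1 / (a * D ^ 3) *
      (2 * a * (a * d ^ 2 + e ^ 2 / m) - e ^ 2 - 2 * a * m * D ^ 2)) :
    d = D ∧ e = a * d ∧ m = a := by
  have hD : 0 < D := hd.trans_le hdD
  have he : 0 < e := (mul_pos ha hd).trans_le hade
  have h1 : a ^ 2 * D ^ 2 ≤ 2 * a * (a * d ^ 2 + e ^ 2 / m) - e ^ 2 - 2 * a * m * D ^ 2 := by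
    have h2 : a / D ≤ (2 * a * (a * d ^ 2 + e ^ 2 / m) - e ^ 2 - 2 * a * m * D ^ 2) /
        (a * D ^ 3) := by
      rw [add_div, one_div_mul_eq_div] at h
      linarith
    rw [le_div_iff₀ (by positivity)] at h2
    have h3 : a / D * (a * D ^ 3) = a ^ 2 * D ^ 2 := by field_simp
    rwa [h3] at h2
  have h4 : e ^ 2 ≤ (m * D) ^ 2 := pow_le_pow_left₀ he.le hemD 2
  have h5 : e ^ 2 / m ≤ m * D ^ 2 := by
    rw [div_le_iff₀ hm]
    linarith
  have h6 : (a * d) ^ 2 ≤ e ^ 2 := pow_le_pow_left₀ (by positivity) hade 2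
  have h7 : (a * d) ^ 2 ≤ (a * D) ^ 2 := pow_le_pow_left₀ (by positivity) (by gcongr) 2
  have h8 : a * (e ^ 2 / m) ≤ a * (m * D ^ 2) := by gcongr
  have h9 : (a * D) ^ 2 = (a * d) ^ 2 := by nlinarith
  have hdD' : d = D := by
    have := (pow_left_inj₀ (by positivity) (by positivity) two_ne_zero).1 h9
    exact (mul_left_cancel₀ ha.ne' this).symm
  have he' : e = a * d :=
    (pow_left_inj₀ he.le (by positivity) two_ne_zero).1 (by nlinarith)
  refine ⟨hdD', he', ?_⟩
  have h10 : a * (e ^ 2 / m) = a * (m * D ^ 2) := by nlinarith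
  have h11 : e ^ 2 = (m * D) ^ 2 := by
    have := mul_left_cancel₀ ha.ne' h10
    rw [div_eq_iff hm.ne'] at this
    linarith
  have h12 := (pow_left_inj₀ he.le (by positivity) two_ne_zero).1 h11
  rw [he', hdD'] at h12
  exact (mul_right_cancel₀ hD.ne' h12).symm

/-- If `G` is a `k`-connected (`k ≥ 2`) graph with `n ≥ 3` vertices, `e` edges, minimum degree
`δ ≥ 1`, and maximum degree `Δ`, and
`Inv(G) ≤ (n − k − 1)/Δ + (1/((k+1)Δ³))(2(k+1)((k+1)δ² + e²/(n − k − 1)) − e² − 2(k+1)(n − k − 1)Δ²)`,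
then `G` is Hamiltonian. -/
theorem stmt10 {V : Type*} [Fintype V] [DecidableEq V] (G : SimpleGraph V) [DecidableRel G.Adj]
    (k : ℕ) (hk : 2 ≤ k) (hconn : IsKConnected G k) (hn : 3 ≤ Fintype.card V)
    (hδ : 1 ≤ G.minDegree)
    (h : invDegree G ≤ ((Fintype.card V : ℝ) - k - 1) / (G.maxDegree : ℝ)
        + (1 / (((k : ℝ) + 1) * (G.maxDegree : ℝ) ^ 3)) *
          (2 * ((k : ℝ) + 1) * (((k : ℝ) + 1) * (G.minDegree : ℝ) ^ 2
              + (G.edgeFinset.card : ℝ) ^ 2 / ((Fintype.card V : ℝ) - k - 1))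
            - (G.edgeFinset.card : ℝ) ^ 2
            - 2 * ((k : ℝ) + 1) * ((Fintype.card V : ℝ) - k - 1) * (G.maxDegree : ℝ) ^ 2)) :
    G.IsHamiltonian := by
  by_contra hG
  obtain ⟨A, hA, hind⟩ := G.exists_isIndepSet_of_not_isHamiltonian hk hconn hn hG
  have hsum : ∑ v ∈ A, G.degree v + ∑ v ∈ Aᶜ, G.degree v = 2 * #G.edgeFinset := by
    rw [Finset.sum_add_sum_compl, G.sum_degrees_eq_twice_card_edges]
  have hsA := SimpleGraph.sum_degree_le_card_edgeFinset_of_isIndepSet hind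
  have hlow : (k + 1) * G.minDegree ≤ ∑ v ∈ A, G.degree v := by
    simpa [hA] using Finset.card_nsmul_le_sum A _ _ fun v _ ↦ G.minDegree_le_degree v
  have hupp : ∑ v ∈ Aᶜ, G.degree v ≤ #Aᶜ * G.maxDegree := by
    simpa using Finset.sum_le_card_nsmul Aᶜ _ _ fun v _ ↦ G.degree_le_maxDegree v
  have hcard : #Aᶜ + (k + 1) = Fintype.card V := by
    rw [← hA, add_comm, Finset.card_add_card_compl]
  have hne : Nonempty V := Fintype.card_pos_iff.1 (by omega)
  have hpos : 0 < #Aᶜ := by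
    by_contra! h0
    have h1 : 1 ≤ (k + 1) * G.minDegree := Nat.mul_pos (by omega) hδ
    rw [Nat.le_zero.1 h0] at hupp
    omega
  have hcardR : (#Aᶜ : ℝ) = (Fintype.card V : ℝ) - k - 1 := by
    rw [← hcard]; push_cast; ring
  rw [← hcardR] at h
  obtain ⟨hreg, hedge, hbal⟩ := eq_of_inv_bound (a := (k : ℝ) + 1) (m := (#Aᶜ : ℝ))
    (d := G.minDegree) (D := G.maxDegree) (e := #G.edgeFinset) (by positivity)
    (by exact_mod_cast hpos) (by exact_mod_cast hδ)
    (by exact_mod_cast G.minDegree_le_maxDegree) (by exact_mod_cast hlow.trans hsA)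
    (by exact_mod_cast (by omega : #G.edgeFinset ≤ #Aᶜ * G.maxDegree))
    (le_trans (le_of_eq (by rw [hcardR]; ring)) ((card_div_maxDegree_le_invDegree G hδ).trans h))
  norm_cast at hreg hedge hbal
  have hdeg : G.IsRegularOfDegree G.minDegree := fun v ↦
    le_antisymm (hreg ▸ G.degree_le_maxDegree v) (G.minDegree_le_degree v)
  refine hG (SimpleGraph.isHamiltonian_of_isIndepSet_compl hk hA (by omega) hind
    (SimpleGraph.isIndepSet_compl_of_card_edgeFinset_le hind (hedge.trans_le hlow)) hdeg ?_)
  obtain ⟨v⟩ := hne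
  exact hdeg v ▸ SimpleGraph.le_degree_of_isKConnected hconn v
end

section
/- Let G be a k-connected (k ≥ 1) finite simple graph with n ≥ 9 vertices, e edges, minimum degree δ, and maximum degree Δ. If F(G) ≤ (n − k − 2)·δ³ + (δ/(k + 2))·( 2(k + 2)·((k + 2)·δ² + e²/(n − k − 2)) − e² − 2(k + 2)·(n − k − 2)·Δ² ), then G is traceable. -/
open Finset

namespace SimpleGraph

variable {V : Type*} {G : SimpleGraph V}

/-- A list of vertices is a longest path of `G` if it is the vertex list of a path and no path
has more vertices. -/
structure IsLongestPath (G : SimpleGraph V) (P : List V) : Prop where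
  isChain : P.IsChain G.Adj
  nodup : P.Nodup
  length_le : ∀ l : List V, l.IsChain G.Adj → l.Nodup → l.length ≤ P.length

/-- The list `Q` is the vertex list of a path from `a` to `b` that is disjoint from `P`. -/
structure IsDetour (G : SimpleGraph V) (P : List V) (a b : V) (Q : List V) : Prop where
  isChain : Q.IsChain G.Adj
  nodup : Q.Nodup
  notMem : ∀ x ∈ Q, x ∉ P
  head : Q.head? = some a
  getLast : Q.getLast? = some b

theorem IsDetour.singleton {P : List V} {a : V} (ha : a ∉ P) : IsDetour G P a a [a] where
  isChain := .singleton a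
  nodup := List.nodup_singleton a
  notMem := by simpa using ha
  head := rfl
  getLast := rfl

theorem IsDetour.length_pos {P Q : List V} {a b : V} (hQ : IsDetour G P a b Q) :
    0 < Q.length := by
  have := hQ.head
  cases Q <;> simp_all

theorem exists_isDetour {P : List V} {a b : V} {ha : a ∉ P} {hb : b ∉ P}
    (h : (G.induce {x | x ∉ P}).Reachable ⟨a, ha⟩ ⟨b, hb⟩) : ∃ Q, IsDetour G P a b Q := by
  obtain ⟨p, hp⟩ := h.exists_isPath
  refine ⟨p.support.map Subtype.val, ?_, ?_, ?_, ?_, ?_⟩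
  · rw [List.isChain_map]
    exact p.isChain_adj_support
  · exact hp.support_nodup.map Subtype.val_injective
  · simp only [List.mem_map]
    rintro x ⟨y, -, rfl⟩
    exact y.2
  · rw [List.head?_map, List.head?_eq_some_head p.support_ne_nil, p.head_support]
    rfl
  · rw [List.getLast?_map, List.getLast?_eq_some_getLast p.support_ne_nil, p.getLast_support]
    rfl

/-- A detour cannot be inserted between two consecutive parts of a longest path. -/
theorem IsLongestPath.not_insert {A B Q : List V} {a b : V} (hP : IsLongestPath G (A ++ B))
    (hQ : IsDetour G (A ++ B) a b Q) (hA : ∀ x ∈ A.getLast?, G.Adj x a)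
    (hB : ∀ y ∈ B.head?, G.Adj b y) : False := by
  have hc := List.isChain_append.1 hP.isChain
  have hlen := hP.length_le (A ++ (Q ++ B)) (by
    refine hc.1.append (hQ.isChain.append hc.2.1 ?_) ?_
    · simpa [hQ.getLast] using hB
    · simpa [hQ.head] using hA) (by
    have h1 := hP.nodup
    have h2 := hQ.nodup
    have h3 := hQ.notMem
    simp only [List.nodup_append, List.mem_append] at *
    grind)
  have := hQ.length_pos
  simp only [List.length_append] at hlen
  omega

/-- A longest path cannot be extended by inserting a detour and reversing a segment. -/
theorem IsLongestPath.not_insert_reverse {A M C Q : List V} {a b : V}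
    (hP : IsLongestPath G (A ++ (M ++ C))) (hM : M ≠ [])
    (hQ : IsDetour G (A ++ (M ++ C)) a b Q) (hA : ∀ x ∈ A.getLast?, G.Adj x a)
    (hb : ∀ y ∈ M.getLast?, G.Adj b y)
    (hC : ∀ y ∈ M.head?, ∀ z ∈ C.head?, G.Adj y z) : False := by
  have hc := List.isChain_append.1 hP.isChain
  have hc' := List.isChain_append.1 hc.2.1
  have hr : M.reverse.IsChain G.Adj := by
    rw [List.isChain_reverse]
    exact hc'.1.imp fun _ _ h => h.symm
  have hlen := hP.length_le (A ++ (Q ++ (M.reverse ++ C))) (by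
    refine hc.1.append (hQ.isChain.append (hr.append hc'.2.1 ?_) ?_) ?_
    · simpa using hC
    · simpa [hQ.getLast, hM] using hb
    · simpa [hQ.head] using hA) (by
    have h1 := hP.nodup
    have h2 := hQ.nodup
    have h3 := hQ.notMem
    simp only [List.nodup_append, List.mem_append, List.mem_reverse, List.nodup_reverse] at *
    grind)
  have := hQ.length_pos
  simp only [List.length_append, List.length_reverse] at hlen
  omega

theorem exists_isLongestPath [Fintype V] (G : SimpleGraph V) : ∃ P, IsLongestPath G P := by
  classical
  let X := {l : {l : List V // l.Nodup} // l.1.IsChain G.Adj}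
  have : Nonempty X := ⟨⟨⟨[], List.nodup_nil⟩, List.isChain_nil⟩⟩
  obtain ⟨P, hP⟩ := Finite.exists_max fun l : X => l.1.1.length
  exact ⟨P.1.1, P.2, P.1.2, fun l hc hn => hP ⟨⟨l, hn⟩, hc⟩⟩

theorem IsLongestPath.ne_nil {P : List V} [Nonempty V] (hP : IsLongestPath G P) : P ≠ [] := by
  rintro rfl
  obtain ⟨v⟩ := ‹Nonempty V›
  simpa using hP.length_le [v] (.singleton v) (List.nodup_singleton v)

theorem IsLongestPath.isTraceable [DecidableEq V] {P : List V} (hP : IsLongestPath G P)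
    (hne : P ≠ []) (hall : ∀ v, v ∈ P) : IsTraceable G := by
  refine ⟨_, _, Walk.ofSupport P hne hP.isChain, ?_⟩
  intro v
  rw [Walk.support_ofSupport]
  exact List.count_eq_one_of_mem hP.nodup (hall v)

/-- In a `k`-connected graph, every vertex off a longest path lies, together with the first vertex
of that path, in an independent set of size `k + 2`. -/
theorem IsLongestPath.exists_indep [Fintype V] [DecidableEq V] {P : List V} {k : ℕ}
    (hP : IsLongestPath G P) (hk : IsKConnected G k) {h v : V} (hh : h ∉ P)
    (hv : P.head? = some v) :
    ∃ S : Finset V, S.card = k + 2 ∧ v ∈ S ∧ h ∈ S ∧ ∀ x ∈ S, ∀ y ∈ S, ¬ G.Adj x y := by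
  classical
  let H : Set V := {x | ∃ hx : x ∉ P, (G.induce {x | x ∉ P}).Reachable ⟨h, hh⟩ ⟨x, hx⟩}
  have hhH : h ∈ H := ⟨hh, .refl _⟩
  have hHP : ∀ x ∈ H, x ∉ P := fun x hx => hx.1
  have hdet : ∀ a ∈ H, ∀ b ∈ H, ∃ Q, IsDetour G P a b Q := fun a ha b hb =>
    exists_isDetour (ha.2.symm.trans hb.2)
  have hclosed : ∀ x ∈ H, ∀ y, G.Adj x y → y ∉ P → y ∈ H := fun x hx y hxy hy =>
    ⟨hy, hx.2.trans (Adj.reachable (by simpa using hxy))⟩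
  have hlen : 0 < P.length := by cases P <;> simp_all
  let I : Finset ℕ := (Finset.range P.length).filter fun i =>
    ∃ x ∈ H, ∀ y ∈ P[i]?, G.Adj x y
  let f : ℕ → V := fun i => P[i]?.getD h
  have hf : ∀ i (hi : i < P.length), f i = P[i] := fun i hi => by simp [f, hi]
  have hmem : ∀ i < P.length, f i ∈ P := fun i hi => by
    rw [hf i hi]; exact List.getElem_mem hi
  have hinj : ∀ i < P.length, ∀ j < P.length, f i = f j → i = j := fun i hi j hj hij => by
    rw [hf i hi, hf j hj] at hij
    exact (hP.nodup.getElem_inj_iff).1 hij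
  have hf0 : f 0 = v := by
    rw [List.head?_eq_getElem?] at hv
    simp [f, hv]
  -- the neighbours of the component of `h` on the path separate it from `v`
  have hIk : k ≤ I.card ∨ 0 ∈ I := by
    by_contra! hlt
    have hcard : (I.image f).card < k := Finset.card_image_le.trans_lt hlt.1
    have hvI : v ∉ I.image f := by
      intro hvI
      obtain ⟨i, hi, hiv⟩ := Finset.mem_image.1 hvI
      rw [← hf0] at hiv
      have := hinj i (by simpa using (Finset.mem_filter.1 hi).1) 0 hlen hiv
      exact hlt.2 (this ▸ hi)
    have hhI : h ∉ I.image f := by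
      intro hhI
      obtain ⟨i, hi, hiv⟩ := Finset.mem_image.1 hhI
      exact hh (hiv ▸ hmem i (by simpa using (Finset.mem_filter.1 hi).1))
    obtain ⟨p⟩ := (hk.2 _ hcard).preconnected ⟨h, by simpa using hhI⟩ ⟨v, by simpa using hvI⟩
    have key : ∀ a b, (G.induce (↑(I.image f) : Set V)ᶜ).Walk a b → a.1 ∈ H → b.1 ∈ H := by
      intro a b p
      induction p with
      | nil => exact id
      | @cons a b c hab p ih =>
        intro ha
        refine ih (hclosed a ha b hab ?_)
        intro hbP
        obtain ⟨i, hi, hib⟩ := List.getElem_of_mem hbP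
        refine b.2 ?_
        rw [Finset.mem_coe, Finset.mem_image]
        refine ⟨i, ?_, (hf i hi).trans hib⟩
        simp only [I, Finset.mem_filter, Finset.mem_range]
        refine ⟨hi, a, ha, ?_⟩
        simp only [List.getElem?_eq_getElem hi, Option.mem_some_iff, forall_eq']
        rw [hib]; exact hab
    have hvH := key _ _ p hhH
    exact hHP v hvH (hf0 ▸ hmem 0 hlen)
  have hpred : ∀ j, (j = 0 ∨ j - 1 ∈ I) →
      ∃ a ∈ H, ∀ y ∈ (P.take j).getLast?, G.Adj y a := by
    rintro j (rfl | hj)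
    · exact ⟨h, hhH, by simp⟩
    · obtain ⟨hi, a, ha, hay⟩ := Finset.mem_filter.1 hj
      refine ⟨a, ha, ?_⟩
      rw [List.getLast?_take]
      have hi := Finset.mem_range.1 hi
      split_ifs
      · simp
      · simp only [List.getElem?_eq_getElem hi, Option.some_or, Option.mem_some_iff,
          forall_eq'] at hay ⊢
        exact hay.symm
  -- a vertex of the path without predecessor, or whose predecessor has a neighbour in `H`,
  -- has no neighbour in `H`
  have hins : ∀ j ≤ P.length, (j = 0 ∨ j - 1 ∈ I) →
      ∀ x ∈ H, ¬ ∀ y ∈ P[j]?, G.Adj x y := by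
    intro j hj hjI x hx hxj
    obtain ⟨a, ha, hay⟩ := hpred j hjI
    obtain ⟨Q, hQ⟩ := hdet a ha x hx
    rw [← List.take_append_drop j P] at hP hQ
    exact hP.not_insert hQ hay (by simpa [List.head?_drop] using hxj)
  have hsucc : ∀ i ∈ I, i + 1 < P.length := by
    intro i hi
    have hil := Finset.mem_range.1 (Finset.mem_filter.1 hi).1
    by_contra! hle
    exact hins (i + 1) hil (.inr hi) h hhH (by simp [List.getElem?_eq_none hle])
  have h0I : 0 ∉ I := fun h0 => by
    obtain ⟨-, x, hx, hxy⟩ := Finset.mem_filter.1 h0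
    exact hins 0 (Nat.zero_le _) (.inl rfl) x hx hxy
  replace hIk : k ≤ I.card := hIk.resolve_right h0I
  let J : Finset ℕ := insert 0 (I.image Nat.succ)
  have hJ : ∀ j ∈ J, j < P.length ∧ (j = 0 ∨ j - 1 ∈ I) := by
    intro j hj
    rcases Finset.mem_insert.1 hj with rfl | hj
    · exact ⟨hlen, .inl rfl⟩
    · obtain ⟨i, hi, rfl⟩ := Finset.mem_image.1 hj
      exact ⟨hsucc i hi, .inr hi⟩
  have hJcard : J.card = I.card + 1 := by
    rw [Finset.card_insert_of_notMem (by simp), Finset.card_image_of_injective _ Nat.succ_injective]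
  have hJH : ∀ j ∈ J, ∀ x ∈ H, ¬ G.Adj x (f j) := by
    intro j hj x hx hadj
    obtain ⟨hjl, hj⟩ := hJ j hj
    refine hins j hjl.le hj x hx ?_
    simpa [List.getElem?_eq_getElem hjl, hf j hjl] using hadj
  have hJJ : ∀ i ∈ J, ∀ j ∈ J, i < j → ¬ G.Adj (f i) (f j) := by
    intro i hi j hj hij hadj
    obtain ⟨hil, hi⟩ := hJ i hi
    obtain ⟨hjl, hj⟩ := hJ j hj
    obtain ⟨hj1, b, hb, hby⟩ := Finset.mem_filter.1 (hj.resolve_left (by omega))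
    have hj1 := Finset.mem_range.1 hj1
    obtain ⟨a, ha, hay⟩ := hpred i hi
    obtain ⟨Q, hQ⟩ := hdet a ha b hb
    have hsplit : P = P.take i ++ ((P.drop i).take (j - i) ++ P.drop j) := by
      have : P.drop j = (P.drop i).drop (j - i) := by
        rw [List.drop_drop]; congr 1; omega
      rw [this, List.take_append_drop, List.take_append_drop]
    rw [hf i hil, hf j hjl] at hadj
    have hhead : ((P.drop i).take (j - i)).head? = some P[i] := by
      rw [List.head?_take, if_neg (by omega), List.head?_drop, List.getElem?_eq_getElem hil]
    have hlast : ((P.drop i).take (j - i)).getLast? = some P[j - 1] := by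
      rw [List.getLast?_take, if_neg (by omega), List.getElem?_drop,
        show i + (j - i - 1) = j - 1 by omega, List.getElem?_eq_getElem hj1, Option.some_or]
    have hne : (P.drop i).take (j - i) ≠ [] := by
      intro hnil
      simp [hnil] at hhead
    rw [hsplit] at hP hQ
    refine hP.not_insert_reverse hne hQ hay ?_ ?_
    · rw [hlast]
      simpa [List.getElem?_eq_getElem hj1] using hby
    · rw [hhead, List.head?_drop, List.getElem?_eq_getElem hjl]
      simpa using hadj
  have hTcard : (J.image f).card = I.card + 1 := by
    rw [Finset.card_image_of_injOn, hJcard]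
    intro i hi j hj hij
    exact hinj i (hJ i hi).1 j (hJ j hj).1 hij
  have hhT : h ∉ J.image f := by
    intro hhT
    obtain ⟨j, hj, hjh⟩ := Finset.mem_image.1 hhT
    exact hh (hjh ▸ hmem j (hJ j hj).1)
  have hvT : v ∈ J.image f := Finset.mem_image.2 ⟨0, Finset.mem_insert_self _ _, hf0⟩
  have hindep : ∀ x ∈ insert h (J.image f), ∀ y ∈ insert h (J.image f), ¬ G.Adj x y := by
    intro x hx y hy hxy
    rcases Finset.mem_insert.1 hx with rfl | hx <;> rcases Finset.mem_insert.1 hy with rfl | hy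
    · exact G.irrefl hxy
    · obtain ⟨j, hj, rfl⟩ := Finset.mem_image.1 hy
      exact hJH j hj _ hhH hxy
    · obtain ⟨j, hj, rfl⟩ := Finset.mem_image.1 hx
      exact hJH j hj _ hhH hxy.symm
    · obtain ⟨i, hi, rfl⟩ := Finset.mem_image.1 hx
      obtain ⟨j, hj, rfl⟩ := Finset.mem_image.1 hy
      rcases lt_trichotomy i j with hij | rfl | hij
      · exact hJJ i hi j hj hij hxy
      · exact G.irrefl hxy
      · exact hJJ j hj i hi hij hxy.symm
  obtain ⟨S, hS, hS', hScard⟩ := Finset.exists_subsuperset_card_eq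
    (s := {v, h}) (t := insert h (J.image f)) (n := k + 2)
    (by
      intro x hx
      rcases Finset.mem_insert.1 hx with rfl | hx
      · exact Finset.mem_insert_of_mem hvT
      · exact Finset.mem_insert.2 (.inl (Finset.mem_singleton.1 hx)))
    (Finset.card_le_two.trans (by omega))
    (by rw [Finset.card_insert_of_notMem hhT, hTcard]; omega)
  exact ⟨S, hScard, hS (by simp), hS (by simp), fun x hx y hy => hindep x (hS' hx) y (hS' hy)⟩

/-- Along a chain that alternates between the two sides of `S`, starting inside `S`, at least
half of the entries lie in `S`. -/
theorem countP_notMem_le_countP_mem [DecidableEq V] {S : Finset V}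
    (hS : ∀ x y, G.Adj x y → (x ∈ S ↔ y ∉ S)) :
    ∀ l : List V, l.IsChain G.Adj → (∀ v ∈ l.head?, v ∈ S) →
      l.countP (· ∉ S) ≤ l.countP (· ∈ S)
  | [], _, _ => by simp
  | [v], _, hv => by
    have : v ∈ S := by simpa using hv
    simp [this]
  | v :: w :: l, hc, hv => by
    have hvS : v ∈ S := by simpa using hv
    have hwS : w ∉ S := (hS v w hc.rel).1 hvS
    have ih := countP_notMem_le_countP_mem hS l hc.of_cons.of_cons (by
      intro u hu
      have hwu : G.Adj w u := by
        cases l with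
        | nil => simp at hu
        | cons a l =>
          obtain rfl : a = u := by simpa using hu
          exact hc.of_cons.rel
      by_contra huS
      exact hwS ((hS w u hwu).2 huS))
    simp [hvS, hwS]
    simpa using ih

/-- The degree sum over an independent set is at most that over its complement, and equality
forces the complement to be independent as well. -/
theorem sum_degree_le_sum_degree_compl [Fintype V] [DecidableEq V] [DecidableRel G.Adj]
    {S : Finset V} (hS : ∀ x ∈ S, ∀ y ∈ S, ¬ G.Adj x y) :
    ∑ u ∈ S, G.degree u ≤ ∑ u ∈ Sᶜ, G.degree u ∧
      (∑ u ∈ S, G.degree u = ∑ u ∈ Sᶜ, G.degree u → ∀ x ∉ S, ∀ y ∉ S, ¬ G.Adj x y) := by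
  have hdeg : ∑ u ∈ S, G.degree u = ∑ v ∈ Sᶜ, (S.filter fun u => G.Adj u v).card := by
    refine Eq.trans ?_ (Finset.sum_card_bipartiteAbove_eq_sum_card_bipartiteBelow G.Adj)
    refine Finset.sum_congr rfl fun u hu => ?_
    rw [← G.card_neighborFinset_eq_degree]
    congr 1
    ext v
    simp only [mem_neighborFinset, Finset.mem_bipartiteAbove, Finset.mem_compl]
    exact ⟨fun huv => ⟨fun hv => hS u hu v hv huv, huv⟩, fun huv => huv.2⟩
  have hsub : ∀ v, (S.filter fun u => G.Adj u v) ⊆ G.neighborFinset v := fun v u hu => by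
    simpa using (Finset.mem_filter.1 hu).2.symm
  have hle : ∀ v ∈ Sᶜ, (S.filter fun u => G.Adj u v).card ≤ G.degree v := fun v _ => by
    rw [← G.card_neighborFinset_eq_degree]
    exact Finset.card_le_card (hsub v)
  rw [hdeg]
  refine ⟨Finset.sum_le_sum hle, fun heq x hx y hy hxy => ?_⟩
  have hx' := (Finset.sum_eq_sum_iff_of_le hle).1 heq x (Finset.mem_compl.2 hx)
  rw [← G.card_neighborFinset_eq_degree] at hx'
  have hyx : y ∈ G.neighborFinset x := by simpa using hxy
  rw [← Finset.eq_of_subset_of_card_le (hsub x) hx'.ge] at hyx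
  exact hy (Finset.mem_filter.1 hyx).1

/-- The equality analysis of the bound on the forgotten index. Here `s`, `m` are the sizes of an
independent set and its complement, `a`, `b` their degree sums, `p`, `q` their sums of cubed
degrees, `d`, `D` the extreme degrees and `e` the number of edges. -/
theorem eq_of_forgotten_bound {s m a b p q d D e : ℝ} (hs : 0 < s) (hm : 0 < m) (hd : 0 < d)
    (hab : a ≤ b) (hsum : a + b = 2 * e) (ha : s * d ≤ a) (hb : b ≤ m * D) (hmb : m * d ≤ b)
    (hp : s * d ^ 3 ≤ p) (hq : m * d ^ 3 + d ^ 2 * (b - m * d) ≤ q)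
    (h : p + q ≤ m * d ^ 3 + d / s *
      (2 * s * (s * d ^ 2 + e ^ 2 / m) - e ^ 2 - 2 * s * m * D ^ 2)) :
    a = b ∧ s = m := by
  have he : s * d ≤ e := by linarith
  have hsd : 0 < s * d := mul_pos hs hd
  have h1 : e ^ 2 / m ≤ m * D ^ 2 := by
    rw [div_le_iff₀ hm]
    nlinarith
  have h2 : s * d ^ 2 + 2 * d * (e - s * d) ≤ e ^ 2 / s := by
    rw [le_div_iff₀ hs]
    nlinarith [sq_nonneg (e - s * d)]
  have h3 : d / s * (2 * s * (s * d ^ 2 + e ^ 2 / m) - e ^ 2 - 2 * s * m * D ^ 2) =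
      2 * s * d ^ 3 + 2 * d * (e ^ 2 / m - m * D ^ 2) - d * (e ^ 2 / s) := by
    field_simp
    ring
  rw [h3] at h
  have h4 : 0 ≤ d * (m * D ^ 2 - e ^ 2 / m) := mul_nonneg hd.le (by linarith)
  have h5 : d * (s * d ^ 2 + 2 * d * (e - s * d)) ≤ d * (e ^ 2 / s) :=
    mul_le_mul_of_nonneg_left h2 hd.le
  have hd2 : 0 < d ^ 2 := by positivity
  have h6 : d ^ 2 * (b - m * d) + 2 * (d ^ 2 * (e - s * d)) ≤ 0 := by nlinarith
  have h7 : 0 ≤ d ^ 2 * (b - m * d) := mul_nonneg hd2.le (by linarith)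
  have h8 : 0 ≤ d ^ 2 * (e - s * d) := mul_nonneg hd2.le (by linarith)
  have h9 : b - m * d = 0 := by
    rcases mul_eq_zero.1 (show d ^ 2 * (b - m * d) = 0 by linarith) with h | h
    · exact absurd h hd2.ne'
    · exact h
  have h10 : e - s * d = 0 := by
    rcases mul_eq_zero.1 (show d ^ 2 * (e - s * d) = 0 by linarith) with h | h
    · exact absurd h hd2.ne'
    · exact h
  have hab' : a = b := by linarith
  refine ⟨hab', mul_right_cancel₀ hd.ne' ?_⟩
  linarith

/-- Two bipartitions of a connected graph that agree at one vertex are equal. -/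
theorem Preconnected.bipartition_ext (hG : G.Preconnected) {S T : Set V}
    (hS : ∀ x y, G.Adj x y → (x ∈ S ↔ y ∉ S)) (hT : ∀ x y, G.Adj x y → (x ∈ T ↔ y ∉ T))
    {v : V} (hvS : v ∈ S) (hvT : v ∈ T) : S = T := by
  have key : ∀ x y, G.Walk x y → (x ∈ S ↔ x ∈ T) → (y ∈ S ↔ y ∈ T) := by
    intro x y p
    induction p with
    | nil => exact id
    | @cons x y z hxy p ih =>
      intro hx
      have h1 := hS x y hxy
      have h2 := hT x y hxy
      exact ih (by tauto)
  ext x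
  obtain ⟨p⟩ := hG v x
  exact key v x p (by tauto)

end SimpleGraph

theorem IsKConnected.connected {V : Type*} [Fintype V] {G : SimpleGraph V} {k : ℕ}
    (h : IsKConnected G k) (hk : 1 ≤ k) : G.Connected := by
  have := h.2 ∅ (by rw [Finset.card_empty]; omega)
  rw [Finset.coe_empty, Set.compl_empty] at this
  exact (SimpleGraph.induceUnivIso G).connected_iff.1 this

open SimpleGraph in
/-- Under the bound on the forgotten index, every independent set of size `k + 2` is one side of
a balanced bipartition. -/
theorem isBipartition_of_forgottenIndex_le {V : Type*} [Fintype V] [DecidableEq V]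
    {G : SimpleGraph V} [DecidableRel G.Adj] {k : ℕ} (hδ : 0 < G.minDegree)
    (h : forgottenIndex G ≤ ((Fintype.card V : ℝ) - k - 2) * (G.minDegree : ℝ) ^ 3
        + ((G.minDegree : ℝ) / ((k : ℝ) + 2)) *
          (2 * ((k : ℝ) + 2) * (((k : ℝ) + 2) * (G.minDegree : ℝ) ^ 2
              + (G.edgeFinset.card : ℝ) ^ 2 / ((Fintype.card V : ℝ) - k - 2))
            - (G.edgeFinset.card : ℝ) ^ 2
            - 2 * ((k : ℝ) + 2) * ((Fintype.card V : ℝ) - k - 2) * (G.maxDegree : ℝ) ^ 2))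
    {S : Finset V} (hcard : S.card = k + 2) (hS : ∀ x ∈ S, ∀ y ∈ S, ¬ G.Adj x y) :
    (∀ x y, G.Adj x y → (x ∈ S ↔ y ∉ S)) ∧ S.card = Sᶜ.card := by
  have hs : (S.card : ℝ) = k + 2 := by rw [hcard]; push_cast; ring
  have hm : (Sᶜ.card : ℝ) = (Fintype.card V : ℝ) - k - 2 := by
    have := S.card_add_card_compl
    have : (S.card : ℝ) + Sᶜ.card = Fintype.card V := by exact_mod_cast this
    linarith
  have hmpos : 0 < Sᶜ.card := by
    obtain ⟨x, hx⟩ := Finset.card_pos.1 (show 0 < S.card by omega)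
    obtain ⟨y, hxy⟩ := (G.degree_pos_iff_exists_adj x).1 (hδ.trans_le (G.minDegree_le_degree x))
    exact Finset.card_pos.2 ⟨y, Finset.mem_compl.2 fun hy => hS x hx y hy hxy⟩
  rw [← hm, ← hs] at h
  obtain ⟨hle, heq⟩ := sum_degree_le_sum_degree_compl hS
  have hδd : ∀ u, (G.minDegree : ℝ) ≤ G.degree u := fun u => by
    exact_mod_cast G.minDegree_le_degree u
  have hdΔ : ∀ u, (G.degree u : ℝ) ≤ G.maxDegree := fun u => by
    exact_mod_cast G.degree_le_maxDegree u
  have hδ' : (0 : ℝ) < G.minDegree := by exact_mod_cast hδ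
  have hF : forgottenIndex G =
      ∑ u ∈ S, (G.degree u : ℝ) ^ 3 + ∑ u ∈ Sᶜ, (G.degree u : ℝ) ^ 3 :=
    (Finset.sum_add_sum_compl S _).symm
  have hsum : ∑ u ∈ S, (G.degree u : ℝ) + ∑ u ∈ Sᶜ, (G.degree u : ℝ) =
      2 * G.edgeFinset.card := by
    rw [Finset.sum_add_sum_compl]
    exact_mod_cast G.sum_degrees_eq_twice_card_edges
  have hlow : ∀ T : Finset V, T.card * (G.minDegree : ℝ) ≤ ∑ u ∈ T, (G.degree u : ℝ) :=
    fun T => by simpa using Finset.card_nsmul_le_sum T _ _ fun u _ => hδd u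
  rw [hF] at h
  obtain ⟨hab, hsm⟩ := eq_of_forgotten_bound (a := ∑ u ∈ S, (G.degree u : ℝ))
    (b := ∑ u ∈ Sᶜ, (G.degree u : ℝ)) (by rw [hs]; positivity) (by exact_mod_cast hmpos) hδ'
    (by exact_mod_cast hle) hsum (hlow S)
    (by simpa using Finset.sum_le_card_nsmul Sᶜ _ _ fun u _ => hdΔ u) (hlow Sᶜ)
    (by simpa using Finset.card_nsmul_le_sum S (fun u => (G.degree u : ℝ) ^ 3) _
          fun u _ => pow_le_pow_left₀ hδ'.le (hδd u) 3)
    (by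
      have : ∑ u ∈ Sᶜ, ((G.minDegree : ℝ) ^ 3 +
          (G.minDegree : ℝ) ^ 2 * ((G.degree u : ℝ) - G.minDegree)) ≤
          ∑ u ∈ Sᶜ, (G.degree u : ℝ) ^ 3 := by
        refine Finset.sum_le_sum fun u _ => ?_
        have h1 := hδd u
        have h2 : (G.minDegree : ℝ) ^ 2 ≤ (G.degree u : ℝ) ^ 2 :=
          pow_le_pow_left₀ hδ'.le h1 2
        have h3 := mul_le_mul_of_nonneg_right h2 (hδ'.le.trans h1)
        nlinarith
      simpa [Finset.sum_add_distrib, ← Finset.mul_sum, Finset.sum_sub_distrib] using this)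
    h
  have hSc := heq (by exact_mod_cast hab)
  refine ⟨fun x y hxy => ⟨fun hx hy => hS x hx y hy hxy, fun hy => ?_⟩, by exact_mod_cast hsm⟩
  by_contra hx
  exact hSc x hx y hy hxy

/-- If `G` is a `k`-connected (`k ≥ 1`) graph with `n ≥ 9` vertices, `e` edges, minimum degree
`δ`, and maximum degree `Δ`, and
`F(G) ≤ (n − k − 2)δ³ + (δ/(k+2))(2(k+2)((k+2)δ² + e²/(n − k − 2)) − e² − 2(k+2)(n − k − 2)Δ²)`,
then `G` is traceable. -/
theorem stmt13 {V : Type*} [Fintype V] [DecidableEq V] (G : SimpleGraph V) [DecidableRel G.Adj]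
    (k : ℕ) (hk : 1 ≤ k) (hconn : IsKConnected G k) (hn : 9 ≤ Fintype.card V)
    (h : forgottenIndex G ≤ ((Fintype.card V : ℝ) - k - 2) * (G.minDegree : ℝ) ^ 3
        + ((G.minDegree : ℝ) / ((k : ℝ) + 2)) *
          (2 * ((k : ℝ) + 2) * (((k : ℝ) + 2) * (G.minDegree : ℝ) ^ 2
              + (G.edgeFinset.card : ℝ) ^ 2 / ((Fintype.card V : ℝ) - k - 2))
            - (G.edgeFinset.card : ℝ) ^ 2
            - 2 * ((k : ℝ) + 2) * ((Fintype.card V : ℝ) - k - 2) * (G.maxDegree : ℝ) ^ 2)) :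
    IsTraceable G := by
  by_contra hnt
  have hG := hconn.connected hk
  have : Nontrivial V := Fintype.one_lt_card_iff_nontrivial.1 (by omega)
  have hδ := hG.preconnected.minDegree_pos_of_nontrivial
  obtain ⟨P, hP⟩ := SimpleGraph.exists_isLongestPath G
  have hne := hP.ne_nil
  have hv := List.head?_eq_some_head hne
  obtain ⟨h₀, hh₀⟩ : ∃ x, x ∉ P := by
    by_contra! hall
    exact hnt (hP.isTraceable hne hall)
  obtain ⟨S, hcard, hvS, hhS, hS⟩ := hP.exists_indep hconn hh₀ hv
  obtain ⟨hbip, hbal⟩ := isBipartition_of_forgottenIndex_le hδ h hcard hS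
  have hoff : ∀ x ∉ P, x ∈ S := by
    intro x hx
    obtain ⟨T, hTcard, hvT, hxT, hT⟩ := hP.exists_indep hconn hx hv
    have hbip' := (isBipartition_of_forgottenIndex_le hδ h hTcard hT).1
    have hST : (S : Set V) = T := hG.preconnected.bipartition_ext (by simpa using hbip)
      (by simpa using hbip') (Finset.mem_coe.2 hvS) (Finset.mem_coe.2 hvT)
    rw [Finset.coe_injective hST]
    exact hxT
  have hcount := SimpleGraph.countP_notMem_le_countP_mem hbip P hP.isChain
    (by simpa [hv] using hvS)
  have hin : (P.filter (· ∈ S)).toFinset.card = P.countP (· ∈ S) := by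
    rw [List.toFinset_card_of_nodup (hP.nodup.filter _), List.countP_eq_length_filter]
  have hout : (P.filter (· ∉ S)).toFinset.card = P.countP (· ∉ S) := by
    rw [List.toFinset_card_of_nodup (hP.nodup.filter _), List.countP_eq_length_filter]
  have hlt : (P.filter (· ∈ S)).toFinset.card < S.card := by
    refine Finset.card_lt_card ⟨fun x hx => by simp_all, fun hsub => ?_⟩
    have := hsub hhS
    simp_all
  have hle : Sᶜ.card ≤ (P.filter (· ∉ S)).toFinset.card := by
    refine Finset.card_le_card fun x hx => ?_
    have hxS := Finset.mem_compl.1 hx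
    have hxP : x ∈ P := by
      by_contra hxP
      exact hxS (hoff x hxP)
    simp [hxS, hxP]
  omega
end
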